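/- Suppose the Cayley graph Γ of a group G with finite generating set S simulates the grid ℤ², in the sense that there is a subshift of finite type on G whose configurations encode, via marked vertices and connecting patterns, a graph isomorphic to the Cayley graph of ℤ². Then the domino problem on G is undecidable. -/

import Mathlib

/-- A tileset `(m, Θ)` tiles the Cayley graph of `G` w.r.t. `Sf`. -/
def Tileable {G : Type*} [Group G] {s : ℕ} (Sf : Fin s → G)
    (m : ℕ) (Θ : List (ℕ × ℕ × ℕ)) : Prop :=
  ∃ a : G → ℕ, (∀ g : G, a g < m) ∧
    ∀ (g : G) (i : Fin s), (a g, (i : ℕ), a (g * Sf i)) ∈ Θ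

/-- Decidability of the domino problem of `G` with respect to `Sf`. -/
def DominoDecidable {G : Type*} [Group G] {s : ℕ} (Sf : Fin s → G) : Prop :=
  ∃ f : ℕ × List (ℕ × ℕ × ℕ) → Bool, Computable f ∧
    ∀ T : ℕ × List (ℕ × ℕ × ℕ), f T = true ↔ Tileable Sf T.1 T.2

/-- A configuration `a` is a solution of the tileset `(m, Θ)`. -/
def IsSolution {G : Type*} [Group G] {s : ℕ} (Sf : Fin s → G)
    (m : ℕ) (Θ : List (ℕ × ℕ × ℕ)) (a : G → ℕ) : Prop :=
  (∀ g : G, a g < m) ∧ ∀ (g : G) (i : Fin s), (a g, (i : ℕ), a (g * Sf i)) ∈ Θ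

/-- Slot `p.2` is an admissible (marked or unmarked) slot at vertex `p.1`:
marked slots are `1 ≤ i ≤ mk(colour)` and unmarked ones `-(uk(colour)) < i ≤ 0`. -/
def SlotOK {G : Type*} (mk uk : ℕ → ℕ) (a : G → ℕ) (p : G × ℤ) : Prop :=
  -(uk (a p.1) : ℤ) < p.2 ∧ p.2 ≤ (mk (a p.1) : ℤ)

/-- One hop along a Cayley edge, allowed by the local connection data `conn`
(which depends only on the two colours, the generator, and the two slots). -/
def Hop {G : Type*} [Group G] {s : ℕ} (Sf : Fin s → G) (mk uk : ℕ → ℕ)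
    (conn : ℕ → Fin s → ℕ → ℤ → ℤ → Prop) (a : G → ℕ) (p q : G × ℤ) : Prop :=
  (∃ i : Fin s, q.1 = p.1 * Sf i ∧ conn (a p.1) i (a q.1) p.2 q.2) ∧
  SlotOK mk uk a p ∧ SlotOK mk uk a q

/-- Decoded adjacency between marked slots: a chain of hops traversing only
unmarked slots in between. -/
def DecodedAdj {G : Type*} [Group G] {s : ℕ} (Sf : Fin s → G) (mk uk : ℕ → ℕ)
    (conn : ℕ → Fin s → ℕ → ℤ → ℤ → Prop) (a : G → ℕ) (x y : G × ℤ) : Prop :=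
  x ≠ y ∧ 1 ≤ x.2 ∧ 1 ≤ y.2 ∧
  ∃ z : G × ℤ, Relation.ReflTransGen
      (fun p q => Hop Sf mk uk conn a p q ∧ q.2 ≤ 0) x z ∧
    Hop Sf mk uk conn a z y

/-- The graph decoded from a configuration `a`: vertices are the marked slots,
edges the decoded adjacencies. -/
def DecodedGraph {G : Type*} [Group G] {s : ℕ} (Sf : Fin s → G) (mk uk : ℕ → ℕ)
    (conn : ℕ → Fin s → ℕ → ℤ → ℤ → Prop) (a : G → ℕ) :
    SimpleGraph {p : G × ℤ // 1 ≤ p.2 ∧ p.2 ≤ (mk (a p.1) : ℤ)} :=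
  SimpleGraph.fromRel (fun x y => DecodedAdj Sf mk uk conn a x.1 y.1)

/-- The grid: the Cayley graph of ℤ². -/
def gridGraph : SimpleGraph (ℤ × ℤ) :=
  SimpleGraph.fromRel (fun p q =>
    (q.1 = p.1 + 1 ∧ q.2 = p.2) ∨ (q.2 = p.2 + 1 ∧ q.1 = p.1))


/-! ### Arithmetic helpers -/

lemma ediv_step (b x : ℤ) (hb : 0 < b) :
    x / b = (x - 1) / b + if b ∣ x then 1 else 0 := by
  split_ifs with h
  · obtain ⟨m, rfl⟩ := h
    rw [Int.mul_ediv_cancel_left _ hb.ne']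
    have : (b * m - 1) / b = m - 1 := by
      rw [Int.ediv_eq_iff_of_pos hb]
      constructor <;> nlinarith
    omega
  · rw [add_zero]
    symm
    rw [Int.ediv_eq_iff_of_pos hb]
    have h1 := Int.emod_add_mul_ediv x b
    have h2 := Int.emod_nonneg x hb.ne'
    have h3 := Int.emod_lt_of_pos x hb
    have h4 : x % b ≠ 0 := fun h0 => h (Int.dvd_of_emod_eq_zero h0)
    have h5 : 0 < x % b := lt_of_le_of_ne h2 (Ne.symm h4)
    constructor <;> nlinarith

lemma alt_bool (f : ℤ → Bool) (h : ∀ j, f (j + 1) = !f j) (h0 : f 0 = true) :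
    ∀ j, f j = false ↔ Odd j := by
  intro j
  induction j using Int.induction_on with
  | zero => simp [h0]
  | succ i ih =>
    rw [h]
    have : Odd ((i : ℤ) + 1) ↔ ¬ Odd (i : ℤ) := by grind
    rw [this, ← ih]; cases f i <;> simp
  | pred i ih =>
    have h1 := h (-(i : ℤ) - 1)
    rw [sub_add_cancel] at h1
    have : Odd (-(i : ℤ) - 1) ↔ ¬ Odd (-(i : ℤ)) := by grind
    rw [this, ← ih, h1]; cases f (-(i : ℤ) - 1) <;> simp

/-! ### The hierarchical skeleton -/

/-- Row side (or column side) of a hierarchical configuration. -/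
structure Half (D : Type) where
  q : ℤ → Bool
  B : ℤ → Bool
  idx : ℤ → ZMod 4
  inc : ℤ → ℤ → Bool
  ch : ℤ → ℤ → ZMod 8
  nb : ℤ → ℤ → Bool
  pi : ℤ → ℤ → ZMod 4
  w : ℤ → ℤ → D

def ev8 (a : ZMod 8) : Prop := a.val % 2 = 0

instance (a : ZMod 8) : Decidable (ev8 a) := by unfold ev8; infer_instance

/-- Local rule for a row, in terms of values at a cell.  The argument `od` says that the row has
odd index, `od'` that the column has odd index. -/
structure RRule {D : Type} (HD : D → D → Prop) (od od' : Prop)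
    (q B : Bool) (idx : ZMod 4) (q' B' : Bool) (idx' : ZMod 4)
    (inc inc' : Bool) (ch ch0 ch' : ZMod 8) (nb nb0 : Bool) (pi pi0 : ZMod 4)
    (w w0 w' : D) : Prop where
  odd_inc : od → inc = true
  odd_even : od → ¬ od' → inc' = false
  odd_ch : od → ev8 ch0 ∧ ch = ch0 + 2
  ev_inc : ¬ od → inc = true → ¬ ev8 ch0 ∧ ch = ch0 + 1
  ev_er : ¬ od → inc = false → inc' = true → ch' = 4 → ev8 ch0 ∧ ch = ch0 + 1
  ev_pass : ¬ od → inc = false → ¬ (inc' = true ∧ ch' = 4) → ch = ch0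
  eq_ch : inc = true → inc' = true → (ch = 2 ∧ q' = false) ∨ (ch = 6 ∧ q' = true)
  gt_ch : inc = true → inc' = false → ch = 0 ∨ ch = 4
  nb_er : ¬ od → inc = false → inc' = true → ch' = 4 → nb = (B' && decide (idx' = 0))
  nb_pass : ¬ od → ¬ (inc = false ∧ inc' = true ∧ ch' = 4) → nb = nb0
  nb_eq : ¬ od → inc = true → inc' = true → B' = nb0
  pi_eq : inc = true → inc' = true → idx' = pi0 + (if B' then 1 else 0) ∧ pi = idx'
  pi_pass : ¬ (inc = true ∧ inc' = true) → pi = pi0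
  q_rule : B = true → idx = 0 → q = false
  w_eq : inc = true → inc' = true → w = w' ∧ (¬ (B' = true ∧ idx' = 0) → HD w0 w)
  w_pass : ¬ (inc = true ∧ inc' = true) → w = w0

/-- The row rules of `R` against columns `C`. -/
def RowRules {D : Type} (HD : D → D → Prop) (R C : Half D) : Prop :=
  ∀ x y : ℤ, RRule HD (Odd y) (Odd x) (R.q y) (R.B y) (R.idx y) (C.q x) (C.B x) (C.idx x)
    (R.inc x y) (C.inc y x) (R.ch x y) (R.ch (x - 1) y) (C.ch y x) (R.nb x y) (R.nb (x - 1) y)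
    (R.pi x y) (R.pi (x - 1) y) (R.w x y) (R.w (x - 1) y) (C.w y x)

def Half.defl {D : Type} (R : Half D) (a b : ℤ) : Half D where
  q j := R.q (2 * j + b)
  B j := R.B (2 * j + b)
  idx j := R.idx (2 * j + b)
  inc i j := R.inc (2 * i + a) (2 * j + b)
  ch i j := R.ch (2 * i + a) (2 * j + b)
  nb i j := R.nb (2 * i + a) (2 * j + b)
  pi i j := R.pi (2 * i + a) (2 * j + b)
  w i j := R.w (2 * i + a) (2 * j + b)

/-- Additional rules: initial rows, seed and counter. -/
structure XRules {D : Type} (Init Seed : D → Prop) (Q : D → ℕ → ℕ → Prop) (R C : Half D)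
    (r : ℤ → ℤ → ℕ) : Prop where
  init : ∀ x y, R.inc x y = true → C.inc y x = true → R.B y = true → R.idx y = 0 →
    Init (R.w x y) ∧ (C.B x = true → C.idx x = 2 → Seed (R.w x y))
  cnt : ∀ x y, R.inc x y = true → C.inc y x = true → Q (R.w x y) (r (x - 1) y) (r x y)
  cnt_pass : ∀ x y, ¬ (R.inc x y = true ∧ C.inc y x = true) → r x y = r (x - 1) y

section deflate
variable {D : Type} {HD VD : D → D → Prop} {R C : Half D}

/-- vertical channel in odd columns at even rows is determined by `q` below -/
lemma ch_odd_even (hR : RowRules HD R C) (hC : RowRules VD C R) {x y : ℤ} (hx : Odd x)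
    (hy : ¬ Odd y) : (C.ch y x = 4 ∧ R.q (y - 1) = false) ∨ (C.ch y x = 0 ∧ R.q (y - 1) = true) := by
  have hy1 : Odd (y - 1) := by grind
  have a1 := (hC y x).odd_ch hx
  have b1 := (hC (y - 1) x).eq_ch ((hC (y - 1) x).odd_inc hx) ((hR x (y - 1)).odd_inc hy1)
  rcases b1 with ⟨h, h'⟩ | ⟨h, h'⟩
  · left; rw [a1.2, h]; exact ⟨by decide, h'⟩
  · right; rw [a1.2, h]; exact ⟨by decide, h'⟩

lemma q_alt (hR : RowRules HD R C) (hC : RowRules VD C R) {y : ℤ} (hy : Odd y) :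
    R.q (y + 2) = !R.q y := by
  have hx : Odd (1 : ℤ) := odd_one
  have a := (hC (y + 2) 1).odd_ch hx
  have b := (hC (y + 1) 1).odd_ch hx
  have e1 : y + 2 - 1 = y + 1 := by ring
  have e2 : y + 1 - 1 = y := by ring
  rw [e1] at a; rw [e2] at b
  have hy2 : Odd (y + 2) := by grind
  have c := (hC y 1).eq_ch ((hC y 1).odd_inc hx) ((hR 1 y).odd_inc hy)
  have d := (hC (y + 2) 1).eq_ch ((hC (y + 2) 1).odd_inc hx) ((hR 1 (y + 2)).odd_inc hy2)
  rw [a.2, b.2] at d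
  rcases c with ⟨h, h'⟩ | ⟨h, h'⟩ <;> rcases d with ⟨g, g'⟩ | ⟨g, g'⟩ <;> rw [h] at g <;>
    first | (exfalso; revert g; decide) | simp [h', g']

lemma exact_row (hR : RowRules HD R C) (hC : RowRules VD C R) {x y : ℤ} (hy : ¬ Odd y)
    (hx : ¬ Odd x) (he : R.q (y - 1) = false) :
    R.inc x y = true ∧ ev8 (R.ch (x - 2) y) ∧ R.ch x y = R.ch (x - 2) y + 2 := by
  have hx1 : Odd (x - 1) := by grind
  have hx2 : Odd (x + 1) := by grind
  have i1 : R.inc (x - 1) y = false := (hC y (x - 1)).odd_even hx1 hy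
  have i2 : R.inc (x + 1) y = false := (hC y (x + 1)).odd_even hx2 hy
  have c1 : C.ch y (x - 1) = 4 := by
    rcases ch_odd_even hR hC hx1 hy with h | h
    · exact h.1
    · rw [he] at h; simp at h
  have c2 : C.ch y (x + 1) = 4 := by
    rcases ch_odd_even hR hC hx2 hy with h | h
    · exact h.1
    · rw [he] at h; simp at h
  have a1 := (hR (x - 1) y).ev_er hy i1 ((hC y (x - 1)).odd_inc hx1) c1
  have a2 := (hR (x + 1) y).ev_er hy i2 ((hC y (x + 1)).odd_inc hx2) c2
  rw [show x - 1 - 1 = x - 2 by ring] at a1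
  rw [show x + 1 - 1 = x by ring] at a2
  have key : ∀ u v : ZMod 8, ev8 u → v = u + 1 → ¬ ev8 v := by decide
  have key2 : ∀ u : ZMod 8, u + 1 + 1 = u + 2 := by decide
  have n1 := key _ _ a1.1 a1.2
  have inc : R.inc x y = true := by
    by_contra hi
    have hi : R.inc x y = false := by simpa using hi
    by_cases h : C.inc y x = true ∧ C.ch y x = 4
    · exact n1 ((hR x y).ev_er hy hi h.1 h.2).1
    · have := (hR x y).ev_pass hy hi h
      rw [this] at a2
      exact n1 a2.1
  refine ⟨inc, a1.1, ?_⟩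
  have := ((hR x y).ev_inc hy inc).2
  rw [this, a1.2, key2]

lemma nonexact_row (hR : RowRules HD R C) (hC : RowRules VD C R) {x y : ℤ} (hy : ¬ Odd y)
    (hx : Odd x) (he : R.q (y - 1) = true) :
    R.ch x y = R.ch (x - 1) y ∧ R.nb x y = R.nb (x - 1) y := by
  have i1 : R.inc x y = false := (hC y x).odd_even hx hy
  have c1 : C.ch y x = 0 := by
    rcases ch_odd_even hR hC hx hy with h | h
    · rw [he] at h; simp at h
    · exact h.1
  have hne : ¬ (C.ch y x = 4) := by rw [c1]; decide
  exact ⟨(hR x y).ev_pass hy i1 (fun h => hne h.2), (hR x y).nb_pass hy (fun h => hne h.2.2)⟩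

lemma exact_nonexact (hR : RowRules HD R C) (hC : RowRules VD C R) {x y : ℤ} (hy : ¬ Odd y)
    (hx : ¬ Odd x) (he : R.q (y - 1) = false) (he' : C.q (x - 1) = true) :
    C.inc y x = false := by
  have hx1 : Odd (x - 1) := by grind
  have hx2 : ¬ Odd (x + 2) := by grind
  have e : C.q (x + 2 - 1) = false := by
    have := q_alt hC hR hx1
    rw [show x + 2 - 1 = x - 1 + 2 by ring, this, he']; rfl
  have a := exact_row hR hC hy hx2 he
  have b := exact_row hC hR hx2 hy e
  have c := (hR (x + 2) y).eq_ch a.1 b.1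
  have d := exact_row hR hC hy hx he
  rw [show x + 2 - 2 = x by ring] at a
  by_contra hi
  have hi : C.inc y x = true := by simpa using hi
  have f := (hR x y).eq_ch d.1 hi
  rw [a.2.2] at c
  rcases c with ⟨h, h'⟩ | ⟨h, h'⟩ <;> rcases f with ⟨g, g'⟩ | ⟨g, g'⟩ <;> rw [g] at h <;>
    (revert h; decide)

lemma defl_rules (hR : RowRules HD R C) (hC : RowRules VD C R) {a b : ℤ} (ha : Even a) (hb : Even b)
    (har : ∀ j : ℤ, R.q (2 * j + b - 1) = false ↔ Odd j)
    (hac : ∀ j : ℤ, C.q (2 * j + a - 1) = false ↔ Odd j) :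
    RowRules HD (R.defl a b) (C.defl b a) := by
  intro i j
  have hx : ¬ Odd (2 * i + a) := by grind
  have hy : ¬ Odd (2 * j + b) := by grind
  have hx1 : Odd (2 * i + a - 1) := by grind
  simp only [Half.defl]
  rw [show 2 * (i - 1) + a = 2 * i + a - 2 by ring]
  have har := har j
  have hac := hac i
  generalize 2 * i + a = x at *
  generalize 2 * j + b = y at *
  have rr := hR x y
  have r1 := hR (x - 1) y
  rw [show x - 1 - 1 = x - 2 by ring] at r1
  have i1 : R.inc (x - 1) y = false := (hC y (x - 1)).odd_even hx1 hy
  have pp : R.pi (x - 1) y = R.pi (x - 2) y := r1.pi_pass (by simp [i1])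
  have pw : R.w (x - 1) y = R.w (x - 2) y := r1.w_pass (by simp [i1])
  have ne : ¬ Odd j → R.ch (x - 1) y = R.ch (x - 2) y ∧ R.nb (x - 1) y = R.nb (x - 2) y := by
    intro hj
    have : R.q (y - 1) = true := by
      by_contra h; exact hj (har.1 (by simpa using h))
    have := nonexact_row hR hC hy hx1 this
    rwa [show x - 1 - 1 = x - 2 by ring] at this
  refine
   { odd_inc := fun hj => (exact_row hR hC hy hx (har.2 hj)).1
     odd_even := fun hj hi => exact_nonexact hR hC hy hx (har.2 hj) ?_
     odd_ch := fun hj => (exact_row hR hC hy hx (har.2 hj)).2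
     ev_inc := fun hj h => ?_
     ev_er := fun hj h h' h'' => ?_
     ev_pass := fun hj h h' => ?_
     eq_ch := rr.eq_ch
     gt_ch := rr.gt_ch
     nb_er := fun _ => rr.nb_er hy
     nb_pass := fun hj h => ?_
     nb_eq := fun hj h h' => ?_
     pi_eq := fun h h' => ?_
     pi_pass := fun h => ?_
     q_rule := rr.q_rule
     w_eq := fun h h' => ?_
     w_pass := fun h => ?_ }
  · by_contra h; exact hi (hac.1 (by simpa using h))
  · rw [← (ne hj).1]; exact rr.ev_inc hy h
  · rw [← (ne hj).1]; exact rr.ev_er hy h h' h''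
  · rw [← (ne hj).1]; exact rr.ev_pass hy h h'
  · rw [← (ne hj).2]; exact rr.nb_pass hy h
  · rw [← (ne hj).2]; exact rr.nb_eq hy h h'
  · rw [← pp]; exact rr.pi_eq h h'
  · rw [← pp]; exact rr.pi_pass h
  · rw [← pw]; exact rr.w_eq h h'
  · rw [← pw]; exact rr.w_pass h

lemma defl_xrules {Init Seed : D → Prop} {Q : D → ℕ → ℕ → Prop} {r : ℤ → ℤ → ℕ}
    (hC : RowRules VD C R) (hX : XRules Init Seed Q R C r)
    {a b : ℤ} (ha : Even a) (hb : Even b) :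
    XRules Init Seed Q (R.defl a b) (C.defl b a) (fun i j => r (2 * i + a) (2 * j + b)) := by
  have pass : ∀ i j : ℤ, r (2 * i + a - 1) (2 * j + b) = r (2 * (i - 1) + a) (2 * j + b) := by
    intro i j
    have hx1 : Odd (2 * i + a - 1) := by grind
    have hy : ¬ Odd (2 * j + b) := by grind
    have i1 : R.inc (2 * i + a - 1) (2 * j + b) = false :=
      (hC (2 * j + b) (2 * i + a - 1)).odd_even hx1 hy
    rw [hX.cnt_pass _ _ (by simp [i1])]
    congr 1; ring
  refine ⟨fun i j => hX.init _ _, fun i j h h' => ?_, fun i j h => ?_⟩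
  · rw [← pass]; exact hX.cnt _ _ h h'
  · rw [← pass]; exact hX.cnt_pass _ _ h

/-- the marker structure of the columns at stage `k` -/
def Mark (k : ℕ) (C : Half D) : Prop :=
  ∃ β : ℤ, ∀ m : ℤ, (C.B (2 * m + 1) = true ↔ (2 : ℤ) ^ k ∣ m - β) ∧
    C.idx (2 * m + 1) = (((m - β) / 2 ^ k : ℤ) : ZMod 4)

lemma mark_of (hR : RowRules HD R C) (hC : RowRules VD C R) (k : ℕ)
    (h : ∃ β : ℤ, ∀ m : ℤ, (C.B (2 * m + 1) = true ↔ (2 : ℤ) ^ k ∣ m - β)) : Mark k C := by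
  obtain ⟨β, h⟩ := h
  have hb : (0 : ℤ) < 2 ^ k := by positivity
  have step : ∀ m : ℤ, C.idx (2 * m + 1) = C.idx (2 * (m - 1) + 1) +
      if (2 : ℤ) ^ k ∣ m - β then 1 else 0 := by
    intro m
    have o1 : Odd (2 * m + 1) := by grind
    have o2 : Odd (2 * (m - 1) + 1) := by grind
    have o3 : ¬ Odd (2 * m) := by grind
    have y1 : Odd (1 : ℤ) := odd_one
    have a := (hR (2 * m + 1) 1).pi_eq ((hR _ _).odd_inc y1) ((hC _ _).odd_inc o1)
    have b := (hR (2 * (m - 1) + 1) 1).pi_eq ((hR _ _).odd_inc y1) ((hC _ _).odd_inc o2)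
    have c := (hR (2 * m) 1).pi_pass (by simp [(hR (2 * m) 1).odd_even y1 o3])
    rw [show 2 * m + 1 - 1 = 2 * m by ring, c] at a
    rw [a.1, ← b.2, show 2 * m - 1 = 2 * (m - 1) + 1 by ring]
    congr 1
    simp only [h m]
  have base : ∀ m : ℤ, C.idx (2 * (m + β) + 1) = C.idx (2 * β + 1) + ((m / 2 ^ k : ℤ) : ZMod 4) := by
    intro m
    have key : ∀ m : ℤ, C.idx (2 * (m + β) + 1) - ((m / 2 ^ k : ℤ) : ZMod 4) =
        C.idx (2 * (m - 1 + β) + 1) - (((m - 1) / 2 ^ k : ℤ) : ZMod 4) := by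
      intro m
      rw [step (m + β), ediv_step _ m hb, show m + β - β = m by ring,
        show m + β - 1 = m - 1 + β by ring]
      split_ifs <;> push_cast <;> ring
    have : C.idx (2 * (m + β) + 1) - ((m / 2 ^ k : ℤ) : ZMod 4) = C.idx (2 * β + 1) := by
      induction m using Int.induction_on with
      | zero => simp
      | succ i ih => rw [key, ← ih]; simp
      | pred i ih => rw [← key]; exact ih
    rw [← this]; ring
  set t : ℤ := ((C.idx (2 * β + 1)).val : ℤ) with ht
  have htc : ((t : ℤ) : ZMod 4) = C.idx (2 * β + 1) := by
    rw [ht]; push_cast; exact ZMod.natCast_zmod_val _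
  refine ⟨β - 2 ^ k * t, fun m => ⟨?_, ?_⟩⟩
  · rw [h m, show m - (β - 2 ^ k * t) = m - β + 2 ^ k * t by ring]
    exact (dvd_add_left (dvd_mul_right _ _)).symm
  · have := base (m - β)
    rw [show m - β + β = m by ring] at this
    rw [this, show m - (β - 2 ^ k * t) = m - β + 2 ^ k * t by ring,
      Int.add_mul_ediv_left _ _ hb.ne', ← htc]
    push_cast; ring

lemma mark_start {k : ℕ} {β : ℤ} {m : ℤ} :
    ((2 : ℤ) ^ k ∣ m - β ∧ (((m - β) / 2 ^ k : ℤ) : ZMod 4) = 0) ↔ 4 * (2 : ℤ) ^ k ∣ m - β := by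
  have hb : (0 : ℤ) < 2 ^ k := by positivity
  rw [ZMod.intCast_zmod_eq_zero_iff_dvd]
  constructor
  · rintro ⟨⟨u, hu⟩, h⟩
    rw [hu, Int.mul_ediv_cancel_left _ hb.ne'] at h
    obtain ⟨v, rfl⟩ := h
    exact ⟨v, by rw [hu]; push_cast; ring⟩
  · rintro ⟨v, hv⟩
    rw [hv, show 4 * (2 : ℤ) ^ k * v = 2 ^ k * (4 * v) by ring, Int.mul_ediv_cancel_left _ hb.ne']
    exact ⟨dvd_mul_right _ _, by simp⟩

lemma mark_defl (hR : RowRules HD R C) (hC : RowRules VD C R) {a b : ℤ} (ha : Even a) (hb : Even b)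
    (har : ∀ j : ℤ, R.q (2 * j + b - 1) = false ↔ Odd j)
    (hac : ∀ j : ℤ, C.q (2 * j + a - 1) = false ↔ Odd j) {k : ℕ} (hM : Mark k C) :
    Mark (k + 1) (C.defl b a) := by
  have h1 := defl_rules hR hC ha hb har hac
  have h2 := defl_rules hC hR hb ha hac har
  refine mark_of h1 h2 _ ?_
  obtain ⟨β, hβ⟩ := hM
  obtain ⟨a', rfl⟩ := ha
  have hs : ∀ m : ℤ, (C.B (2 * m + 1) = true ∧ C.idx (2 * m + 1) = 0) ↔ 4 * (2 : ℤ) ^ k ∣ m - β := by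
    intro m
    rw [(hβ m).1, (hβ m).2, mark_start]
  have hq : C.q (2 * β + 1) = false := by
    have := (hs β).2 (by simp)
    exact (hC 0 (2 * β + 1)).q_rule this.1 this.2
  have hodd : Odd (β + 1 - a') := by
    rw [← hac]; rw [← hq]; congr 1; ring
  obtain ⟨i0, hi0⟩ := hodd
  refine ⟨i0, fun i => ?_⟩
  simp only [Half.defl]
  have hj : Odd (2 * i + 1) := by grind
  set x := 2 * (2 * i + 1) + (a' + a') with hx
  have hxe : ¬ Odd x := by grind
  have hx1 : Odd (x - 1) := by grind
  have eC : C.q (x - 1) = false := (hac _).2 hj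
  set y := 2 * 1 + b with hy
  have eR : R.q (y - 1) = false := (har 1).2 odd_one
  have hye : ¬ Odd y := by grind
  have a1 := exact_row hR hC hye hxe eR
  have b1 := exact_row hC hR hxe hye eC
  have n1 := (hR x y).nb_eq hye a1.1 b1.1
  have c1 : C.ch y (x - 1) = 4 := by
    rcases ch_odd_even hR hC hx1 hye with h | h
    · exact h.1
    · rw [eR] at h; simp at h
  have n2 := (hR (x - 1) y).nb_er hye ((hC y (x - 1)).odd_even hx1 hye)
    ((hC y (x - 1)).odd_inc hx1) c1
  rw [n1, n2]
  have e : x - 1 = 2 * (2 * i + a') + 1 := by rw [hx]; ring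
  rw [e, Bool.and_eq_true, decide_eq_true_iff, hs]
  rw [show 2 * i + a' - β = 2 * (i - i0) by linarith, show 4 * (2 : ℤ) ^ k = 2 * 2 ^ (k + 1) by ring]
  exact mul_dvd_mul_iff_left (by norm_num)

end deflate

/-- choose the offset -/
lemma exists_offset {D : Type} {HD VD : D → D → Prop} {R C : Half D} (hR : RowRules HD R C)
    (hC : RowRules VD C R) : ∃ b : ℤ, Even b ∧ ∀ j : ℤ, R.q (2 * j + b - 1) = false ↔ Odd j := by
  have key : ∀ b : ℤ, Even b → R.q (b - 1) = true → ∀ j : ℤ, R.q (2 * j + b - 1) = false ↔ Odd j := by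
    intro b hb h
    apply alt_bool (fun j => R.q (2 * j + b - 1))
    · intro j
      have := q_alt hR hC (y := 2 * j + b - 1) (by grind)
      rw [← this]; congr 1; ring
    · simpa using h
  by_cases h : R.q (-1) = true
  · exact ⟨0, by simp, key 0 (by simp) (by simpa using h)⟩
  · refine ⟨2, by simp, key 2 (by simp) ?_⟩
    have := q_alt hR hC (y := -1) (by decide)
    simp at h
    rw [h] at this
    simpa using this

/-- A full valid configuration at stage `k`. -/
def Stage {D : Type} (HD VD : D → D → Prop) (Init Seed : D → Prop) (Q : D → ℕ → ℕ → Prop)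
    (k : ℕ) (P : ℕ → Prop) : Prop :=
  ∃ (R C : Half D) (r : ℤ → ℤ → ℕ), RowRules HD R C ∧ RowRules VD C R ∧
    XRules Init Seed Q R C r ∧ Mark k R ∧ Mark k C ∧ ∀ x y, P (r x y)

lemma stage_succ {D : Type} {HD VD : D → D → Prop} {Init Seed : D → Prop} {Q : D → ℕ → ℕ → Prop}
    {k : ℕ} {P : ℕ → Prop} (h : Stage HD VD Init Seed Q k P) :
    Stage HD VD Init Seed Q (k + 1) P := by
  obtain ⟨R, C, r, hR, hC, hX, mR, mC, hP⟩ := h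
  obtain ⟨b, hb, hbq⟩ := exists_offset hR hC
  obtain ⟨a, ha, haq⟩ := exists_offset hC hR
  exact ⟨R.defl a b, C.defl b a, _, defl_rules hR hC ha hb hbq haq, defl_rules hC hR hb ha haq hbq,
    defl_xrules hC hX ha hb, mark_defl hC hR hb ha haq hbq mR, mark_defl hR hC ha hb hbq haq mC,
    fun x y => hP _ _⟩

lemma stage_all {D : Type} {HD VD : D → D → Prop} {Init Seed : D → Prop} {Q : D → ℕ → ℕ → Prop}
    {P : ℕ → Prop} (h : Stage HD VD Init Seed Q 0 P) (k : ℕ) :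
    Stage HD VD Init Seed Q k P := by
  induction k with
  | zero => exact h
  | succ k ih => exact stage_succ ih

/-- Boxes of data extracted from a stage. -/
lemma stage_box {D : Type} {HD VD : D → D → Prop} {Init Seed : D → Prop} {Q : D → ℕ → ℕ → Prop}
    {P : ℕ → Prop} {k : ℕ} (h : Stage HD VD Init Seed Q k P) :
    ∃ (d : ℤ → ℤ → D) (r : ℤ → ℤ → ℕ),
      (∀ i j, 0 < i → i < 4 * 2 ^ k → HD (d (i - 1) j) (d i j)) ∧
      (∀ i j, 0 < j → j < 4 * 2 ^ k → VD (d i (j - 1)) (d i j)) ∧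
      (∀ i, Init (d i 0)) ∧ Seed (d (2 * 2 ^ k) 0) ∧
      (∀ i j, Q (d i j) (r (i - 1) j) (r i j)) ∧ ∀ i j, P (r i j) := by
  obtain ⟨R, C, r, hR, hC, hX, ⟨β, mR⟩, ⟨γ, mC⟩, hP⟩ := h
  have hk : (0 : ℤ) < 2 ^ k := by positivity
  have ox : ∀ i : ℤ, Odd (2 * i + 1) := fun i => by grind
  have ex : ∀ i : ℤ, ¬ Odd (2 * i) := fun i => by grind
  have iR : ∀ x j : ℤ, R.inc x (2 * j + 1) = true := fun x j => (hR x _).odd_inc (ox j)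
  have iC : ∀ y i : ℤ, C.inc y (2 * i + 1) = true := fun y i => (hC y _).odd_inc (ox i)
  have iR' : ∀ i j : ℤ, R.inc (2 * i + 1) (2 * j) = false :=
    fun i j => (hC _ _).odd_even (ox i) (ex j)
  have iC' : ∀ i j : ℤ, C.inc (2 * j + 1) (2 * i) = false :=
    fun i j => (hR _ _).odd_even (ox j) (ex i)
  have wRp : ∀ i j : ℤ, R.w (2 * i) (2 * j + 1) = R.w (2 * (i - 1) + 1) (2 * j + 1) := by
    intro i j
    rw [(hR (2 * i) (2 * j + 1)).w_pass (by simp [iC'])]; congr 1; ring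
  have wCp : ∀ i j : ℤ, C.w (2 * j) (2 * i + 1) = C.w (2 * (j - 1) + 1) (2 * i + 1) := by
    intro i j
    rw [(hC (2 * j) (2 * i + 1)).w_pass (by simp [iR'])]; congr 1; ring
  have rp : ∀ i j : ℤ, r (2 * i) (2 * j + 1) = r (2 * (i - 1) + 1) (2 * j + 1) := by
    intro i j
    rw [hX.cnt_pass _ _ (by simp [iC'])]; congr 1; ring
  have sR : ∀ m : ℤ, (R.B (2 * m + 1) = true ∧ R.idx (2 * m + 1) = 0) ↔ 4 * (2 : ℤ) ^ k ∣ m - β := by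
    intro m
    rw [(mR m).1, (mR m).2, mark_start]
  have sC : ∀ m : ℤ, (C.B (2 * m + 1) = true ∧ C.idx (2 * m + 1) = 0) ↔ 4 * (2 : ℤ) ^ k ∣ m - γ := by
    intro m
    rw [(mC m).1, (mC m).2, mark_start]
  have nd : ∀ i : ℤ, 0 < i → i < 4 * 2 ^ k → ¬ (4 * (2 : ℤ) ^ k ∣ i) := fun i h1 h2 h3 =>
    absurd (Int.le_of_dvd h1 h3) (not_le.2 h2)
  refine ⟨fun i j => R.w (2 * (i + γ) + 1) (2 * (j + β) + 1),
    fun i j => r (2 * (i + γ) + 1) (2 * (j + β) + 1), ?_, ?_, ?_, ?_, ?_, fun _ _ => hP _ _⟩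
  · intro i j h1 h2
    have := ((hR (2 * (i + γ) + 1) (2 * (j + β) + 1)).w_eq (iR _ _) (iC _ _)).2
      (by rw [sC, add_sub_cancel_right]; exact nd i h1 h2)
    rw [add_sub_cancel_right, wRp] at this
    simp only
    rwa [show i - 1 + γ = i + γ - 1 by ring]
  · intro i j h1 h2
    have e1 := ((hR (2 * (i + γ) + 1) (2 * (j + β) + 1)).w_eq (iR _ _) (iC _ _)).1
    have e2 := ((hR (2 * (i + γ) + 1) (2 * (j - 1 + β) + 1)).w_eq (iR _ _) (iC _ _)).1
    have := ((hC (2 * (j + β) + 1) (2 * (i + γ) + 1)).w_eq (iC _ _) (iR _ _)).2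
      (by rw [sR, add_sub_cancel_right]; exact nd j h1 h2)
    rw [add_sub_cancel_right, wCp, show j + β - 1 = j - 1 + β by ring] at this
    simp only
    rw [e1, e2]; exact this
  · intro i
    have hs := (sR (0 + β)).2 (by simp)
    exact (hX.init _ _ (iR _ _) (iC _ _) hs.1 hs.2).1
  · have hs := (sR (0 + β)).2 (by simp)
    refine (hX.init _ _ (iR _ _) (iC _ _) hs.1 hs.2).2 ?_ ?_
    · rw [(mC _).1]; simp
    · rw [(mC _).2, add_sub_cancel_right, Int.mul_ediv_cancel _ hk.ne']; rfl
  · intro i j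
    have := hX.cnt (2 * (i + γ) + 1) (2 * (j + β) + 1) (iR _ _) (iC _ _)
    rw [add_sub_cancel_right, rp] at this
    simp only
    rwa [show i - 1 + γ = i + γ - 1 by ring]


/-! ### The canonical hierarchical configuration -/

lemma ev8_int (z : ℤ) : ev8 (z : ZMod 8) ↔ z % 2 = 0 := by
  unfold ev8
  have := ZMod.val_intCast (n := 8) z
  omega

lemma cast8 (z w : ℤ) : (z : ZMod 8) = (w : ZMod 8) ↔ z % 8 = w % 8 :=
  ZMod.intCast_eq_intCast_iff z w 8

lemma level_cases (x : ℤ) (hx : x ≠ 0) : ∃ (j : ℕ) (I : ℤ), x = 2 ^ j * (2 * I + 1) ∧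
    (2 : ℤ) ^ (padicValInt 2 x) = 2 ^ j ∧ x / (2 * 2 ^ j) = I ∧ x / 2 ^ j = 2 * I + 1 := by
  obtain ⟨u, hu⟩ := padicValInt_dvd (p := 2) x
  push_cast at hu
  set j := padicValInt 2 x with hj
  have hodd : Odd u := by
    by_contra h
    rw [Int.not_odd_iff_even] at h
    obtain ⟨v, rfl⟩ := h
    have : ((2 : ℕ) : ℤ) ^ (j + 1) ∣ x := ⟨v, by push_cast; rw [hu]; ring⟩
    rw [padicValInt_dvd_iff] at this
    omega
  obtain ⟨I, rfl⟩ := hodd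
  have hp : (0 : ℤ) < 2 ^ j := by positivity
  refine ⟨j, I, hu, rfl, ?_, ?_⟩
  · rw [Int.ediv_eq_iff_of_pos (by positivity)]
    constructor <;> nlinarith
  · rw [hu, Int.mul_ediv_cancel_left _ hp.ne']

lemma dvd_level (k j : ℕ) (I : ℤ) : ((2 : ℤ) ^ k ∣ 2 ^ j * (2 * I + 1)) ↔ k ≤ j := by
  constructor
  · intro h
    have h1 : IsCoprime ((2 : ℤ) ^ k) (2 * I + 1) := by
      apply IsCoprime.pow_left
      exact ⟨-I, 1, by ring⟩
    have := h1.dvd_of_dvd_mul_right h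
    have h2 : (2 ^ k : ℕ) ∣ 2 ^ j := by exact_mod_cast this
    exact (Nat.pow_dvd_pow_iff_le_right (by norm_num)).1 h2
  · intro h
    exact (pow_dvd_pow _ h).mul_right _

lemma level_eq (k j : ℕ) (I : ℤ) :
    (2 * (2 : ℤ) ^ k ∣ 2 ^ j * (2 * I + 1) - 2 ^ k) ↔ j = k := by
  constructor
  · rintro ⟨u, hu⟩
    have e : 2 ^ j * (2 * I + 1) = 2 ^ k * (2 * u + 1) := by linarith
    have h1 := (dvd_level k j I).1 ⟨_, e⟩
    have h2 := (dvd_level j k u).1 ⟨_, e.symm⟩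
    omega
  · rintro rfl
    exact ⟨I, by ring⟩

lemma level_zero (k : ℕ) : ¬ (2 * (2 : ℤ) ^ k ∣ 0 - 2 ^ k) := by
  rintro ⟨u, hu⟩
  have hp : (0 : ℤ) < 2 ^ k := by positivity
  have : (2 : ℤ) ^ k * (2 * u + 1) = 0 := by linarith
  rcases mul_eq_zero.1 this with h | h <;> omega

/-- scale of an index -/
def bb (y : ℤ) : ℤ := 2 ^ (padicValInt 2 y)

open Classical in
noncomputable def canon {D : Type} [Inhabited D] (W : ℤ → ℤ → ℤ → D) : Half D where
  q y := decide (y / bb y % 4 = 3)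
  B y := decide (bb y ∣ y / (2 * bb y))
  idx y := ((y / (2 * bb y) / bb y : ℤ) : ZMod 4)
  inc x y := decide (y ≠ 0 ∧ bb y ∣ x)
  ch x y := if y = 0 then 0 else ((2 * x / bb y : ℤ) : ZMod 8)
  nb x y := if y = 0 then false else decide (2 * bb y ∣ (x - bb y / 2) / bb y)
  pi x y := if y = 0 then 0 else (((x - bb y) / (2 * bb y) / bb y : ℤ) : ZMod 4)
  w x y := if y = 0 then default else W (bb y) ((x - bb y) / (2 * bb y)) (y / (2 * bb y))

lemma start_iff (k : ℕ) (J : ℤ) :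
    ((2 : ℤ) ^ k ∣ J ∧ (((J / 2 ^ k : ℤ) : ZMod 4)) = 0) ↔ 4 * 2 ^ k ∣ J := by
  have := mark_start (k := k) (β := 0) (m := J)
  simpa using this

lemma q_start (k : ℕ) (J : ℤ) (h1 : (2 : ℤ) ^ k ∣ J) (h2 : (((J / 2 ^ k : ℤ) : ZMod 4)) = 0) :
    (2 * J + 1) % 4 ≠ 3 := by
  obtain ⟨u, hu⟩ := (start_iff k J).1 ⟨h1, h2⟩
  have : J = 2 * (2 * (2 ^ k * u)) := by rw [hu]; ring
  omega

set_option maxHeartbeats 1000000 in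
lemma canon_rules {D : Type} [Inhabited D] (HD : D → D → Prop) (W W' : ℤ → ℤ → ℤ → D)
    (hW : ∀ b i j, W b i j = W' b j i)
    (hH : ∀ (k : ℕ) i j, ¬ (4 * (2 : ℤ) ^ k ∣ i) → HD (W (2 ^ k) (i - 1) j) (W (2 ^ k) i j)) :
    RowRules HD (canon W) (canon W') := by
  intro x y
  by_cases hy : y = 0
  · subst hy
    have i0 : ∀ x, (canon W).inc x 0 = false := fun x => by simp [canon]
    have c0 : ∀ x, (canon W).ch x 0 = 0 := fun x => by simp [canon]
    have c0' : (canon W').ch 0 x = 0 := by simp [canon]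
    have n0 : ∀ x, (canon W).nb x 0 = false := fun x => by simp [canon]
    have p0 : ∀ x, (canon W).pi x 0 = 0 := fun x => by simp [canon]
    have w0 : ∀ x, (canon W).w x 0 = default := fun x => by simp [canon]
    have q0 : (canon W).q 0 = false := by simp [canon]
    have h04 : ¬ ((0 : ZMod 8) = 4) := by decide
    have hno : ¬ Odd (0 : ℤ) := by simp
    rw [i0, c0, c0, c0', n0, n0, p0, p0, w0, w0, q0]
    exact ⟨fun h => absurd h hno, fun h => absurd h hno, fun h => absurd h hno,
      fun _ h => absurd h (by simp), fun _ _ _ h => absurd h h04, fun _ _ _ => rfl,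
      fun h => absurd h (by simp), fun h => absurd h (by simp), fun _ _ _ h => absurd h h04,
      fun _ _ => rfl, fun _ h => absurd h (by simp), fun h => absurd h (by simp), fun _ => rfl,
      fun _ _ => rfl, fun h => absurd h (by simp), fun _ => rfl⟩
  · obtain ⟨k, J, hye, hbk, hJ, hu⟩ := level_cases y hy
    have hp : (0 : ℤ) < 2 ^ k := by positivity
    have hk0 : Odd y ↔ k = 0 := by
      rw [hye]
      have := dvd_level 1 k J
      rw [pow_one] at this
      rw [← Int.not_even_iff_odd, even_iff_two_dvd, this]; omega
    -- step facts
    have sC : (x - 2 ^ k) / (2 * 2 ^ k) = (x - 1 - 2 ^ k) / (2 * 2 ^ k) +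
        if 2 * (2 : ℤ) ^ k ∣ x - 2 ^ k then 1 else 0 := by
      rw [ediv_step (2 * 2 ^ k) (x - 2 ^ k) (by positivity)]
      congr 2; ring
    have qr : (canon W).B y = true → (canon W).idx y = 0 → (canon W).q y = false := by
      simp only [canon, bb, hbk, hJ, hu, decide_eq_true_eq, decide_eq_false_iff_not]
      exact q_start k J
    have sCh : k ≠ 0 → 2 * x / 2 ^ k = 2 * (x - 1) / 2 ^ k +
        if (2 : ℤ) ^ (k - 1) ∣ x then 1 else 0 := by
      intro hk
      obtain ⟨h, rfl⟩ := Nat.exists_eq_succ_of_ne_zero hk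
      have : ∀ z : ℤ, 2 * z / 2 ^ h.succ = z / 2 ^ h := by
        intro z
        rw [pow_succ, mul_comm (2 ^ h : ℤ) 2, Int.mul_ediv_mul_of_pos _ _ (by norm_num)]
      rw [this, this, Nat.succ_sub_one]
      exact ediv_step _ _ (by positivity)
    have sNb : k ≠ 0 → (x - 2 ^ k / 2) / 2 ^ k = (x - 1 - 2 ^ k / 2) / 2 ^ k +
        if 2 * (2 : ℤ) ^ (k - 1) ∣ x - 2 ^ (k - 1) then 1 else 0 := by
      intro hk
      obtain ⟨h, rfl⟩ := Nat.exists_eq_succ_of_ne_zero hk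
      have e : (2 : ℤ) ^ h.succ / 2 = 2 ^ h := by
        rw [pow_succ]; exact Int.mul_ediv_cancel _ (by norm_num)
      rw [e, Nat.succ_sub_one, ediv_step _ (x - 2 ^ h) hp, Nat.succ_eq_add_one, pow_succ]
      rw [show (2 : ℤ) ^ h * 2 = 2 * 2 ^ h by ring]
      congr 2; ring
    by_cases hx : x = 0
    · subst hx
      rw [if_neg (level_zero k), add_zero] at sC
      have sNb := fun h => sNb h
      simp only [if_neg (level_zero (k - 1)), add_zero] at sNb
      simp only [dvd_zero, if_true] at sCh
      refine ⟨?_, ?_, ?_, ?_, ?_, ?_, ?_, ?_, ?_, ?_, ?_, ?_, ?_, qr, ?_, ?_⟩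
      · simp [canon, hy]
      · simp [canon]
      · rw [hk0]; intro h
        subst h
        simp [canon, hy, bb, hbk]
        decide
      · rw [hk0]; intro h _
        have := sCh h
        simp only [canon, bb, hbk, if_neg hy]
        rw [ev8_int, this, show 2 * (0 - 1) / 2 ^ k = (-1 : ℤ) by simp at this; simp; omega]
        decide
      · simp [canon, hy]
      · simp [canon, hy]
      · simp [canon]
      · simp [canon, hy]
      · simp [canon]
      · rw [hk0]; intro h _
        have := sNb h
        simp only [canon, bb, hbk, if_neg hy]
        rw [this]
      · simp [canon]
      · simp [canon]
      · simp only [canon, bb, hbk, if_neg hy]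
        rw [sC]; simp
      · simp [canon]
      · simp only [canon, bb, hbk, if_neg hy]
        rw [sC]; simp
    · obtain ⟨j, I, hxe, hbj, hI, hv⟩ := level_cases x hx
      have hpj : (0 : ℤ) < 2 ^ j := by positivity
      have hj0 : Odd x ↔ j = 0 := by
        rw [hxe]
        have := dvd_level 1 j I
        rw [pow_one] at this
        rw [← Int.not_even_iff_odd, even_iff_two_dvd, this]; omega
      have incR : (canon W).inc x y = decide (k ≤ j) := by
        simp only [canon, bb, hbk]
        rw [hxe]; simp [hy, dvd_level]
      have incC : (canon W').inc y x = decide (j ≤ k) := by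
        simp only [canon, bb, hbj]
        rw [hye]; simp [hx, dvd_level]
      have lk : (2 * (2 : ℤ) ^ k ∣ x - 2 ^ k) ↔ j = k := by
        rw [hxe]; exact level_eq k j I
      have lk1 : (2 * (2 : ℤ) ^ (k - 1) ∣ x - 2 ^ (k - 1)) ↔ j = k - 1 := by
        rw [hxe]; exact level_eq (k - 1) j I
      have dk1 : ((2 : ℤ) ^ (k - 1) ∣ x) ↔ k - 1 ≤ j := by
        rw [hxe]; exact dvd_level (k - 1) j I
      simp only [lk] at sC
      simp only [lk1] at sNb
      simp only [dk1] at sCh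
      have hch : (canon W).ch x y = ((2 * x / 2 ^ k : ℤ) : ZMod 8) := by
        simp only [canon, bb, hbk, if_neg hy]
      have hch0 : (canon W).ch (x - 1) y = ((2 * (x - 1) / 2 ^ k : ℤ) : ZMod 8) := by
        simp only [canon, bb, hbk, if_neg hy]
      have hch' : (canon W').ch y x = ((2 * y / 2 ^ j : ℤ) : ZMod 8) := by
        simp only [canon, bb, hbj, if_neg hx]
      have hnb : (canon W).nb x y = decide (2 * 2 ^ k ∣ (x - 2 ^ k / 2) / 2 ^ k) := by
        simp only [canon, bb, hbk, if_neg hy]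
      have hnb0 : (canon W).nb (x - 1) y = decide (2 * 2 ^ k ∣ (x - 1 - 2 ^ k / 2) / 2 ^ k) := by
        simp only [canon, bb, hbk, if_neg hy]
      have hB' : (canon W').B x = decide (2 ^ j ∣ I) := by
        simp only [canon, bb, hbj, hI]
      have hidx' : (canon W').idx x = ((I / 2 ^ j : ℤ) : ZMod 4) := by
        simp only [canon, bb, hbj, hI]
      have hq' : (canon W').q x = decide ((2 * I + 1) % 4 = 3) := by
        simp only [canon, bb, hbj, hv]
      have hpi : (canon W).pi x y = (((x - 2 ^ k) / (2 * 2 ^ k) / 2 ^ k : ℤ) : ZMod 4) := by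
        simp only [canon, bb, hbk, if_neg hy]
      have hpi0 : (canon W).pi (x - 1) y =
          (((x - 1 - 2 ^ k) / (2 * 2 ^ k) / 2 ^ k : ℤ) : ZMod 4) := by
        simp only [canon, bb, hbk, if_neg hy]
      have hw : (canon W).w x y = W (2 ^ k) ((x - 2 ^ k) / (2 * 2 ^ k)) J := by
        simp only [canon, bb, hbk, if_neg hy, hJ]
      have hw0 : (canon W).w (x - 1) y = W (2 ^ k) ((x - 1 - 2 ^ k) / (2 * 2 ^ k)) J := by
        simp only [canon, bb, hbk, if_neg hy, hJ]
      have hw' : (canon W').w y x = W' (2 ^ j) ((y - 2 ^ j) / (2 * 2 ^ j)) I := by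
        simp only [canon, bb, hbj, if_neg hx, hI]
      -- value of `2 x / 2 ^ k` when `k ≤ j`
      have v1 : k ≤ j → 2 * x / 2 ^ k = 2 * (2 ^ (j - k) * (2 * I + 1)) := by
        intro h
        have : 2 * x = 2 ^ k * (2 * (2 ^ (j - k) * (2 * I + 1))) := by
          rw [hxe]
          have : (2 : ℤ) ^ j = 2 ^ k * 2 ^ (j - k) := by rw [← pow_add]; congr 1; omega
          rw [this]; ring
        rw [this, Int.mul_ediv_cancel_left _ hp.ne']
      have v2 : j ≤ k → 2 * y / 2 ^ j = 2 * (2 ^ (k - j) * (2 * J + 1)) := by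
        intro h
        have : 2 * y = 2 ^ j * (2 * (2 ^ (k - j) * (2 * J + 1))) := by
          rw [hye]
          have : (2 : ℤ) ^ k = 2 ^ j * 2 ^ (k - j) := by rw [← pow_add]; congr 1; omega
          rw [this]; ring
        rw [this, Int.mul_ediv_cancel_left _ hpj.ne']
      have erk : j < k → ((canon W').ch y x = 4 ↔ j = k - 1) := by
        intro h
        rw [hch', v2 h.le, show (4 : ZMod 8) = ((4 : ℤ) : ZMod 8) by rfl, cast8]
        constructor
        · intro h1
          by_contra hne
          have : (2 : ℤ) ^ (k - j) = 4 * 2 ^ (k - j - 2) := by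
            rw [show (4 : ℤ) = 2 ^ 2 by norm_num, ← pow_add]; congr 1; omega
          rw [this, show 2 * (4 * 2 ^ (k - j - 2) * (2 * J + 1)) =
            8 * ((2 : ℤ) ^ (k - j - 2) * (2 * J + 1)) by ring] at h1
          omega
        · intro h1
          have : k - j = 1 := by omega
          rw [this]; omega
      -- index facts when `j = k`
      have xI : j = k → (x - 2 ^ k) / (2 * 2 ^ k) = I := by
        rintro rfl
        rw [hxe, show (2 : ℤ) ^ j * (2 * I + 1) - 2 ^ j = 2 * 2 ^ j * I by ring]
        exact Int.mul_ediv_cancel_left _ (by positivity)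
      have yJ : j = k → (y - 2 ^ j) / (2 * 2 ^ j) = J := by
        rintro rfl
        rw [hye, show (2 : ℤ) ^ j * (2 * J + 1) - 2 ^ j = 2 * 2 ^ j * J by ring]
        exact Int.mul_ediv_cancel_left _ (by positivity)
      refine ⟨?_, ?_, ?_, ?_, ?_, ?_, ?_, ?_, ?_, ?_, ?_, ?_, ?_, qr, ?_, ?_⟩
      · rw [hk0, incR]; intro h; simp [h]
      · rw [hk0, hj0, incC]; intro h h'; simp; omega
      · rw [hk0]; intro h
        rw [hch, hch0, ev8_int, h]
        simp only [pow_zero, Int.ediv_one]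
        refine ⟨by omega, ?_⟩
        push_cast; ring
      · rw [hk0, incR, hch, hch0, ev8_int, decide_eq_true_eq]; intro h h'
        have := sCh h
        rw [if_pos (by omega)] at this
        have v := v1 h'
        refine ⟨by omega, ?_⟩
        rw [this]; push_cast; ring
      · rw [hk0, incR, incC]; intro h h1 h2 h3
        have hjk : j < k := by simpa using h1
        have e := (erk hjk).1 h3
        rw [hch, hch0, ev8_int]
        have := sCh h
        rw [if_pos (by omega)] at this
        have : 2 * x / 2 ^ k = 2 * I + 1 := by
          have e2 : (2 : ℤ) ^ k = 2 * 2 ^ j := by rw [← pow_succ']; congr 1; omega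
          rw [e2, Int.mul_ediv_mul_of_pos _ _ (by norm_num), hv]
        refine ⟨by omega, ?_⟩
        rw [sCh h, if_pos (by omega)]; push_cast; ring
      · rw [hk0, incR, incC]; intro h h1 h2
        have hjk : j < k := by simpa using h1
        have e : ¬ j = k - 1 := fun he => h2 ⟨by simp; omega, (erk hjk).2 he⟩
        rw [hch, hch0, sCh h, if_neg (by omega), add_zero]
      · rw [incR, incC, decide_eq_true_eq, decide_eq_true_eq]; intro h1 h2
        have e : j = k := by omega
        have v := v1 h1
        rw [hch, hq', v, e, Nat.sub_self, pow_zero, one_mul]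
        rw [show (2 : ZMod 8) = ((2 : ℤ) : ZMod 8) by rfl,
          show (6 : ZMod 8) = ((6 : ℤ) : ZMod 8) by rfl, cast8, cast8]
        simp only [decide_eq_true_eq, decide_eq_false_iff_not]
        omega
      · rw [incR, incC, decide_eq_true_eq, decide_eq_false_iff_not]; intro h1 h2
        have v := v1 h1
        have : (2 : ℤ) ^ (j - k) = 2 * 2 ^ (j - k - 1) := by
          rw [← pow_succ']; congr 1; omega
        rw [hch, v, this, show 2 * (2 * 2 ^ (j - k - 1) * (2 * I + 1)) =
          4 * ((2 : ℤ) ^ (j - k - 1) * (2 * I + 1)) by ring]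
        rw [show (0 : ZMod 8) = ((0 : ℤ) : ZMod 8) by rfl,
          show (4 : ZMod 8) = ((4 : ℤ) : ZMod 8) by rfl, cast8, cast8]
        omega
      · rw [hk0, incR, incC]; intro h h1 h2 h3
        have hjk : j < k := by simpa using h1
        have e := (erk hjk).1 h3
        rw [hnb, hB', hidx']
        have e2 : (2 : ℤ) ^ k = 2 * 2 ^ j := by rw [← pow_succ']; congr 1; omega
        have e3 : (x - 2 ^ k / 2) / 2 ^ k = I := by
          rw [e2, Int.mul_ediv_cancel_left _ (by norm_num), hxe,
            show (2 : ℤ) ^ j * (2 * I + 1) - 2 ^ j = 2 * 2 ^ j * I by ring]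
          exact Int.mul_ediv_cancel_left _ (by positivity)
        rw [e3, e2, ← Bool.decide_and]
        congr 1
        rw [start_iff, show (2 : ℤ) * (2 * 2 ^ j) = 4 * 2 ^ j by ring]
      · rw [hk0, incR, incC]; intro h h1
        rw [hnb, hnb0, sNb h, if_neg, add_zero]
        intro he
        exact h1 ⟨by simp; omega, by simp; omega, (erk (by omega)).2 he⟩
      · rw [hk0, incR, incC, decide_eq_true_eq, decide_eq_true_eq]; intro h h1 h2
        have e : j = k := by omega
        subst e
        have s := sNb h
        rw [if_neg (by omega), add_zero] at s
        rw [hB', hnb0, ← s]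
        have e2 : (2 : ℤ) ^ j = 2 * 2 ^ (j - 1) := by rw [← pow_succ']; congr 1; omega
        have hpp : (0 : ℤ) < 2 ^ (j - 1) := by positivity
        have e3 : (x - 2 ^ j / 2) / 2 ^ j = 2 * I := by
          rw [Int.ediv_eq_iff_of_pos hpj]
          have : (2 : ℤ) ^ j / 2 = 2 ^ (j - 1) := by
            rw [e2]; exact Int.mul_ediv_cancel_left _ (by norm_num)
          rw [this, hxe]
          constructor <;> nlinarith
        rw [e3]
        congr 1
        rw [mul_dvd_mul_iff_left (by norm_num : (2 : ℤ) ≠ 0)]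
      · rw [incR, incC, decide_eq_true_eq, decide_eq_true_eq]; intro h1 h2
        have e : j = k := by omega
        have s := sC
        rw [if_pos e, xI e] at s
        rw [hidx', hpi0, hpi, hB', xI e, e]
        refine ⟨?_, rfl⟩
        have : (x - 1 - 2 ^ k) / (2 * 2 ^ k) = I - 1 := by omega
        rw [this, ediv_step _ I hp]
        simp only [decide_eq_true_eq]
        split_ifs <;> push_cast <;> ring
      · rw [incR, incC, decide_eq_true_eq, decide_eq_true_eq]; intro h
        rw [hpi, hpi0, sC, if_neg (by omega), add_zero]
      · rw [incR, incC, decide_eq_true_eq, decide_eq_true_eq]; intro h1 h2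
        have e : j = k := by omega
        have s := sC
        rw [if_pos e, xI e] at s
        have : (x - 1 - 2 ^ k) / (2 * 2 ^ k) = I - 1 := by omega
        rw [hw, hw0, hw', hB', hidx', xI e, yJ e, this, hW, e]
        refine ⟨rfl, fun h => ?_⟩
        rw [← hW]
        apply hH
        rw [← start_iff]
        simpa using h
      · rw [incR, incC, decide_eq_true_eq, decide_eq_true_eq]; intro h
        rw [hw, hw0, sC, if_neg (by omega), add_zero]

open Classical in
/-- canonical counter -/
noncomputable def canonR (f : ℤ → ℤ → ℤ → ℕ) (x y : ℤ) : ℕ :=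
  if y = 0 then 0 else f (bb y) ((x - bb y) / (2 * bb y)) (y / (2 * bb y))

lemma canon_x {D : Type} [Inhabited D] (Init Seed : D → Prop) (Q : D → ℕ → ℕ → Prop)
    (W W' : ℤ → ℤ → ℤ → D) (f : ℤ → ℤ → ℤ → ℕ)
    (hI : ∀ (k : ℕ) i j, 4 * (2 : ℤ) ^ k ∣ j → Init (W (2 ^ k) i j))
    (hS : ∀ (k : ℕ) i j, 4 * (2 : ℤ) ^ k ∣ j → 4 * (2 : ℤ) ^ k ∣ i - 2 * 2 ^ k →
      Seed (W (2 ^ k) i j))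
    (hQ : ∀ (k : ℕ) i j, Q (W (2 ^ k) i j) (f (2 ^ k) (i - 1) j) (f (2 ^ k) i j)) :
    XRules Init Seed Q (canon W) (canon W') (canonR f) := by
  have main : ∀ x y, (canon W).inc x y = true → (canon W').inc y x = true →
      ∃ (k : ℕ) (I J : ℤ), y ≠ 0 ∧ bb y = 2 ^ k ∧ bb x = 2 ^ k ∧ y / (2 * 2 ^ k) = J ∧
        x / (2 * 2 ^ k) = I ∧ (x - 2 ^ k) / (2 * 2 ^ k) = I ∧
        (x - 1 - 2 ^ k) / (2 * 2 ^ k) = I - 1 := by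
    intro x y h1 h2
    have hy : y ≠ 0 := by
      rintro rfl; simp [canon] at h1
    have hx : x ≠ 0 := by
      rintro rfl; simp [canon] at h2
    obtain ⟨k, J, hye, hbk, hJ, hu⟩ := level_cases y hy
    obtain ⟨j, I, hxe, hbj, hI, hv⟩ := level_cases x hx
    simp only [canon, bb, hbk, decide_eq_true_eq] at h1
    simp only [canon, bb, hbj, decide_eq_true_eq] at h2
    have a := h1.2
    have b := h2.2
    rw [hxe, dvd_level] at a
    rw [hye, dvd_level] at b
    have e : j = k := by omega
    subst e
    have e1 : (x - 2 ^ j) / (2 * 2 ^ j) = I := by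
      rw [hxe, show (2 : ℤ) ^ j * (2 * I + 1) - 2 ^ j = 2 * 2 ^ j * I by ring]
      exact Int.mul_ediv_cancel_left _ (by positivity)
    refine ⟨j, I, J, hy, hbk, hbj, hJ, hI, e1, ?_⟩
    have s := ediv_step (2 * 2 ^ j) (x - 2 ^ j) (by positivity)
    rw [if_pos (by rw [hxe]; exact (level_eq j j I).2 rfl), e1] at s
    rw [show x - 1 - 2 ^ j = x - 2 ^ j - 1 by ring]; omega
  refine ⟨?_, ?_, ?_⟩
  · intro x y h1 h2 h3 h4
    obtain ⟨k, I, J, hy, a, b, c, d, e, g⟩ := main x y h1 h2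
    have hst : 4 * 2 ^ k ∣ J := by
      simp only [canon, a, c, decide_eq_true_eq] at h3 h4
      exact (start_iff k J).1 ⟨h3, h4⟩
    simp only [canon, a, b, c, d, e, if_neg hy]
    refine ⟨hI _ _ _ hst, fun h5 h6 => hS _ _ _ hst ?_⟩
    simp only [decide_eq_true_eq] at h5
    obtain ⟨u, rfl⟩ := h5
    rw [Int.mul_ediv_cancel_left _ (by positivity)] at h6
    have : ((u - 2 : ℤ) : ZMod 4) = 0 := by push_cast; rw [h6]; decide
    rw [ZMod.intCast_zmod_eq_zero_iff_dvd] at this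
    obtain ⟨v, hv⟩ := this
    exact ⟨v, by rw [show u = 2 + 4 * v by push_cast at hv; omega]; ring⟩
  · intro x y h1 h2
    obtain ⟨k, I, J, hy, a, b, c, d, e, g⟩ := main x y h1 h2
    simp only [canon, canonR, a, c, e, g, if_neg hy]
    exact hQ _ _ _
  · intro x y h
    by_cases hy : y = 0
    · simp [canonR, hy]
    · simp only [canonR, if_neg hy]
      congr 1
      obtain ⟨k, J, hye, hbk, hJ, hu⟩ := level_cases y hy
      have hbk' : bb y = 2 ^ k := hbk
      rw [hbk', ediv_step (2 * 2 ^ k) (x - 2 ^ k) (by positivity), if_neg, add_zero]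
      · congr 1; ring
      · intro hd
        by_cases hx : x = 0
        · subst hx; exact level_zero k hd
        · obtain ⟨j, I, hxe, hbj, hI, hv⟩ := level_cases x hx
          have hbj' : bb x = 2 ^ j := hbj
          rw [hxe, level_eq] at hd
          subst hd
          apply h
          simp only [canon, hbk', hbj', decide_eq_true_eq]
          refine ⟨⟨hy, ?_⟩, ⟨hx, ?_⟩⟩
          · exact ⟨_, hxe⟩
          · exact ⟨_, hye⟩

lemma canon_B {D : Type} [Inhabited D] (W : ℤ → ℤ → ℤ → D) {x : ℤ} (hx : Odd x) :
    (canon W).B x = true := by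
  have : x ≠ 0 := by rintro rfl; simp at hx
  obtain ⟨j, I, hxe, hbj, hI, hv⟩ := level_cases x this
  have hj : j = 0 := by
    by_contra h
    rw [hxe] at hx
    have := (dvd_level 1 j I).2 (by omega)
    rw [pow_one, ← even_iff_two_dvd] at this
    exact (Int.not_even_iff_odd.2 hx) this
  simp [canon, bb, hbj, hj]


/-! ### Tile systems with an unbounded counter reading an input word -/

structure CSys where
  Z : Type
  fin : Finite Z
  H : Z → Z → Prop
  V : Z → Z → Prop
  op : Z → Fin 3
  inp : Z → Option ℕ

/-- counter update -/
def opRule (len : ℕ) (o : Fin 3) (r0 r : ℕ) : Prop :=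
  (o = 0 → r = r0) ∧ (o = 1 → r = 0) ∧ (o = 2 → r = min (r0 + 1) len)

structure CSys.IsTiling (S : CSys) (l : List ℕ) (z : ℤ → ℤ → S.Z) (r : ℤ → ℤ → ℕ) : Prop where
  le : ∀ x y, r x y ≤ l.length
  hor : ∀ x y, S.H (z x y) (z (x + 1) y)
  ver : ∀ x y, S.V (z x y) (z x (y + 1))
  opr : ∀ x y, opRule l.length (S.op (z (x + 1) y)) (r x y) (r (x + 1) y)
  inp : ∀ x y σ, S.inp (z x y) = some σ → l.getD (r x y) 0 = σ

def CSys.Tiles (S : CSys) (l : List ℕ) : Prop := ∃ z r, S.IsTiling l z r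

/-! ### The hierarchical tile system -/

structure HCell (D : Type) where
  q : Bool
  B : Bool
  idx : ZMod 4
  inc : Bool
  ch : ZMod 8
  nb : Bool
  pi : ZMod 4
  w : D

instance {D : Type} [Finite D] : Finite (HCell D) := by
  have : Finite (ZMod 4) := inferInstanceAs (Finite (Fin 4))
  have : Finite (ZMod 8) := inferInstanceAs (Finite (Fin 8))
  refine Finite.of_injective (β := Bool × Bool × ZMod 4 × Bool × ZMod 8 × Bool × ZMod 4 × D)
    (fun c => (c.q, c.B, c.idx, c.inc, c.ch, c.nb, c.pi, c.w)) ?_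
  rintro ⟨⟩ ⟨⟩ h
  simp only [Prod.mk.injEq] at h
  simp [h]

structure Cell (D : Type) where
  odr : Bool
  odc : Bool
  R : HCell D
  C : HCell D

instance {D : Type} [Finite D] : Finite (Cell D) := by
  refine Finite.of_injective (β := Bool × Bool × HCell D × HCell D)
    (fun c => (c.odr, c.odc, c.R, c.C)) ?_
  rintro ⟨⟩ ⟨⟩ h
  simp only [Prod.mk.injEq] at h
  simp [h]

/-- rule for a cell with half `h` and previous half `h0` along the channel; crossing half `c` -/
def HRule {D : Type} (HD : D → D → Prop) (od od' : Prop) (h0 h c : HCell D) : Prop :=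
  RRule HD od od' h.q h.B h.idx c.q c.B c.idx h.inc c.inc h.ch h0.ch c.ch h.nb h0.nb h.pi h0.pi
    h.w h0.w c.w

structure DSpec (D : Type) where
  HD : D → D → Prop
  VD : D → D → Prop
  Init : D → Prop
  Seed : D → Prop
  op : D → Fin 3
  inp : D → Option ℕ

structure HorRule {D : Type} (S : DSpec D) (z z' : Cell D) : Prop where
  odr : z'.odr = z.odr
  odc : z'.odc = !z.odc
  q : z'.R.q = z.R.q
  B : z'.R.B = z.R.B
  idx : z'.R.idx = z.R.idx
  rule : HRule S.HD (z'.odr = true) (z'.odc = true) z.R z'.R z'.C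
  init : z'.R.inc = true → z'.C.inc = true → z'.R.B = true → z'.R.idx = 0 →
    S.Init z'.R.w ∧ (z'.C.B = true → z'.C.idx = 2 → S.Seed z'.R.w)
  base : (z'.odr = true → z'.R.B = true) ∧ (z'.odc = true → z'.C.B = true)

structure VerRule {D : Type} (S : DSpec D) (z z' : Cell D) : Prop where
  odc : z'.odc = z.odc
  odr : z'.odr = !z.odr
  q : z'.C.q = z.C.q
  B : z'.C.B = z.C.B
  idx : z'.C.idx = z.C.idx
  rule : HRule S.VD (z'.odc = true) (z'.odr = true) z.C z'.C z'.R

def hier {D : Type} [Finite D] (S : DSpec D) : CSys where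
  Z := Cell D
  fin := inferInstance
  H := HorRule S
  V := VerRule S
  op z := if z.R.inc = true ∧ z.C.inc = true then S.op z.R.w else 0
  inp z := if z.R.inc = true ∧ z.C.inc = true then S.inp z.R.w else none

def DSpec.Q {D : Type} (S : DSpec D) (l : List ℕ) (d : D) (r0 r : ℕ) : Prop :=
  opRule l.length (S.op d) r0 r ∧ ∀ σ, S.inp d = some σ → l.getD r 0 = σ

lemma const_int {α : Type} (f : ℤ → α) (h : ∀ x, f (x + 1) = f x) (x : ℤ) : f x = f 0 := by
  induction x using Int.induction_on with
  | zero => rfl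
  | succ i ih => rw [h, ih]
  | pred i ih => rw [← h, sub_add_cancel, ih]

lemma parity_bool (f : ℤ → Bool) (h : ∀ x, f (x + 1) = !f x) (h0 : f 0 = false) (x : ℤ) :
    f x = true ↔ Odd x := by
  have := alt_bool (fun x => !f x) (by intro j; simp [h]) (by simp [h0]) x
  rw [← this]; simp

lemma exists_shift (f : ℤ → Bool) (h : ∀ x, f (x + 1) = !f x) :
    ∃ a : ℤ, ∀ x, f (x + a) = true ↔ Odd x := by
  by_cases h0 : f 0 = true
  · refine ⟨1, parity_bool (fun x => f (x + 1)) (fun x => h _) ?_⟩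
    have := h 0
    rw [h0] at this
    simpa using this
  · refine ⟨0, parity_bool (fun x => f (x + 0)) (fun x => by simp [h]) ?_⟩
    simpa using h0

def halfOf {D : Type} (z : ℤ → ℤ → HCell D) : Half D where
  q y := (z 0 y).q
  B y := (z 0 y).B
  idx y := (z 0 y).idx
  inc x y := (z x y).inc
  ch x y := (z x y).ch
  nb x y := (z x y).nb
  pi x y := (z x y).pi
  w x y := (z x y).w

theorem hier_force {D : Type} [Finite D] (S : DSpec D) (l : List ℕ) (h : (hier S).Tiles l) :
    Stage S.HD S.VD S.Init S.Seed (S.Q l) 0 (fun r => r ≤ l.length) := by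
  obtain ⟨z, r, ht⟩ := h
  change ℤ → ℤ → Cell D at z
  have hor : ∀ x y, HorRule S (z x y) (z (x + 1) y) := ht.hor
  have ver : ∀ x y, VerRule S (z x y) (z x (y + 1)) := ht.ver
  have odc : ∀ x y, (z x y).odc = (z x 0).odc := fun x y =>
    const_int (fun y => (z x y).odc) (fun y => (ver x y).odc) y
  have odr : ∀ x y, (z x y).odr = (z 0 y).odr := fun x y =>
    const_int (fun x => (z x y).odr) (fun x => (hor x y).odr) x
  obtain ⟨a, ha⟩ := exists_shift (fun x => (z x 0).odc) (fun x => (hor x 0).odc)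
  obtain ⟨b, hb⟩ := exists_shift (fun y => (z 0 y).odr) (fun y => (ver 0 y).odr)
  set u : ℤ → ℤ → Cell D := fun x y => z (x + a) (y + b) with hu
  have hor' : ∀ x y, HorRule S (u (x - 1) y) (u x y) := by
    intro x y
    have := hor (x - 1 + a) (y + b)
    rwa [show x - 1 + a + 1 = x + a by ring] at this
  have ver' : ∀ x y, VerRule S (u x (y - 1)) (u x y) := by
    intro x y
    have := ver (x + a) (y - 1 + b)
    rwa [show y - 1 + b + 1 = y + b by ring] at this
  have odc' : ∀ x y, (u x y).odc = true ↔ Odd x := fun x y => by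
    rw [← ha x]; simp only [hu]; rw [odc]
  have odr' : ∀ x y, (u x y).odr = true ↔ Odd y := fun x y => by
    rw [← hb y]; simp only [hu]; rw [odr]
  have cq : ∀ x y, (u x y).R.q = (u 0 y).R.q := fun x y =>
    const_int (fun x => (u x y).R.q) (fun x => by
      have := (hor' (x + 1) y).q; rwa [add_sub_cancel_right] at this) x
  have cB : ∀ x y, (u x y).R.B = (u 0 y).R.B := fun x y =>
    const_int (fun x => (u x y).R.B) (fun x => by
      have := (hor' (x + 1) y).B; rwa [add_sub_cancel_right] at this) x
  have ci : ∀ x y, (u x y).R.idx = (u 0 y).R.idx := fun x y =>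
    const_int (fun x => (u x y).R.idx) (fun x => by
      have := (hor' (x + 1) y).idx; rwa [add_sub_cancel_right] at this) x
  have cq' : ∀ x y, (u x y).C.q = (u x 0).C.q := fun x y =>
    const_int (fun y => (u x y).C.q) (fun y => by
      have := (ver' x (y + 1)).q; rwa [add_sub_cancel_right] at this) y
  have cB' : ∀ x y, (u x y).C.B = (u x 0).C.B := fun x y =>
    const_int (fun y => (u x y).C.B) (fun y => by
      have := (ver' x (y + 1)).B; rwa [add_sub_cancel_right] at this) y
  have ci' : ∀ x y, (u x y).C.idx = (u x 0).C.idx := fun x y =>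
    const_int (fun y => (u x y).C.idx) (fun y => by
      have := (ver' x (y + 1)).idx; rwa [add_sub_cancel_right] at this) y
  let R := halfOf (fun x y => (u x y).R)
  let C := halfOf (fun y x => (u x y).C)
  have hR : RowRules S.HD R C := by
    intro x y
    have := (hor' x y).rule
    unfold HRule at this
    rw [odr' x y, odc' x y, cq, cB, ci, cq', cB', ci'] at this
    exact this
  have hC : RowRules S.VD C R := by
    intro y x
    have := (ver' x y).rule
    unfold HRule at this
    rw [odr' x y, odc' x y, cq, cB, ci, cq', cB', ci'] at this
    exact this
  have opr : ∀ x y, opRule l.length ((hier S).op (u x y)) (r (x - 1 + a) (y + b))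
      (r (x + a) (y + b)) := by
    intro x y
    have := ht.opr (x - 1 + a) (y + b)
    rwa [show x - 1 + a + 1 = x + a by ring] at this
  refine ⟨R, C, fun x y => r (x + a) (y + b), hR, hC, ⟨?_, ?_, ?_⟩, ?_, ?_, fun x y => ht.le _ _⟩
  · intro x y h1 h2 h3 h4
    have := (hor' x y).init h1 h2 (by rw [cB]; exact h3) (by rw [ci]; exact h4)
    rw [cB', ci'] at this
    exact this
  · intro x y h1 h2
    have hc : (u x y).R.inc = true ∧ (u x y).C.inc = true := ⟨h1, h2⟩
    refine ⟨?_, fun σ hσ => ?_⟩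
    · have := opr x y
      simp only [hier, if_pos hc] at this
      exact this
    · apply ht.inp
      change (if (u x y).R.inc = true ∧ (u x y).C.inc = true then S.inp (u x y).R.w else none) = _
      rw [if_pos hc]; exact hσ
  · intro x y hn
    have hc : ¬ ((u x y).R.inc = true ∧ (u x y).C.inc = true) := hn
    have := opr x y
    simp only [hier, if_neg hc] at this
    exact this.1 rfl
  · refine mark_of hC hR 0 ⟨0, fun m => ?_⟩
    have := (hor' 0 (2 * m + 1)).base.1 ((odr' _ _).2 (by grind))
    simp only [pow_zero, isUnit_one, IsUnit.dvd, iff_true]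
    exact this
  · refine mark_of hR hC 0 ⟨0, fun m => ?_⟩
    have := (hor' (2 * m + 1) 0).base.2 ((odc' _ _).2 (by grind))
    simp only [pow_zero, isUnit_one, IsUnit.dvd, iff_true]
    exact this

open Classical in
theorem hier_exist {D : Type} [Finite D] [Inhabited D] (S : DSpec D) (l : List ℕ)
    (W : ℤ → ℤ → ℤ → D) (f : ℤ → ℤ → ℤ → ℕ)
    (hH : ∀ (k : ℕ) i j, ¬ (4 * (2 : ℤ) ^ k ∣ i) → S.HD (W (2 ^ k) (i - 1) j) (W (2 ^ k) i j))
    (hV : ∀ (k : ℕ) i j, ¬ (4 * (2 : ℤ) ^ k ∣ j) → S.VD (W (2 ^ k) i (j - 1)) (W (2 ^ k) i j))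
    (hI : ∀ (k : ℕ) i j, 4 * (2 : ℤ) ^ k ∣ j → S.Init (W (2 ^ k) i j))
    (hS : ∀ (k : ℕ) i j, 4 * (2 : ℤ) ^ k ∣ j → 4 * (2 : ℤ) ^ k ∣ i - 2 * 2 ^ k →
      S.Seed (W (2 ^ k) i j))
    (hQ : ∀ (k : ℕ) i j, S.Q l (W (2 ^ k) i j) (f (2 ^ k) (i - 1) j) (f (2 ^ k) i j))
    (hf : ∀ b i j, f b i j ≤ l.length) : (hier S).Tiles l := by
  let W' : ℤ → ℤ → ℤ → D := fun b j i => W b i j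
  let R := canon W
  let C := canon W'
  have hR : RowRules S.HD R C := canon_rules _ W W' (fun _ _ _ => rfl) hH
  have hC : RowRules S.VD C R := canon_rules _ W' W (fun _ _ _ => rfl) (fun k i j => hV k j i)
  have hX : XRules S.Init S.Seed (S.Q l) R C (canonR f) := canon_x _ _ _ W W' f hI hS hQ
  let z : ℤ → ℤ → Cell D := fun x y =>
    ⟨decide (Odd y), decide (Odd x),
      ⟨R.q y, R.B y, R.idx y, R.inc x y, R.ch x y, R.nb x y, R.pi x y, R.w x y⟩,
      ⟨C.q x, C.B x, C.idx x, C.inc y x, C.ch y x, C.nb y x, C.pi y x, C.w y x⟩⟩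
  refine ⟨z, canonR f, ⟨?_, ?_, ?_, ?_, ?_⟩⟩
  · intro x y
    unfold canonR
    split_ifs
    · simp
    · exact hf _ _ _
  · intro x y
    refine ⟨rfl, ?_, rfl, rfl, rfl, ?_, hX.init _ _, ?_⟩
    · have : Odd (x + 1) ↔ ¬ Odd x := by grind
      simp only [z, this]; rw [decide_not]
    · have := hR (x + 1) y
      simp only [HRule, z, decide_eq_true_eq]
      rwa [add_sub_cancel_right] at this
    · exact ⟨fun h => canon_B W (x := y) (by simpa [z] using h),
        fun h => canon_B W' (x := x + 1) (by simpa only [z, decide_eq_true_eq] using h)⟩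
  · intro x y
    refine ⟨rfl, ?_, rfl, rfl, rfl, ?_⟩
    · have : Odd (y + 1) ↔ ¬ Odd y := by grind
      simp only [z, this]; rw [decide_not]
    · have := hC (y + 1) x
      simp only [HRule, z, decide_eq_true_eq]
      rwa [add_sub_cancel_right] at this
  · intro x y
    by_cases hc : R.inc (x + 1) y = true ∧ C.inc y (x + 1) = true
    · have := (hX.cnt _ _ hc.1 hc.2).1
      rw [add_sub_cancel_right] at this
      simp only [hier, z, if_pos hc]
      exact this
    · have := hX.cnt_pass _ _ hc
      rw [add_sub_cancel_right] at this
      simp only [hier, z, if_neg hc]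
      exact ⟨fun _ => this, fun h => by simp at h, fun h => by simp at h⟩
  · intro x y σ h
    by_cases hc : R.inc x y = true ∧ C.inc y x = true
    · simp only [hier, z, if_pos hc] at h
      exact (hX.cnt _ _ hc.1 hc.2).2 σ h
    · simp only [hier, z, if_neg hc] at h
      simp at h


/-! ### Turing machines as tiles -/

open Turing in
structure Conf (Γ Λ : Type) where
  q : Λ
  h : ℤ
  τ : ℤ → Γ

open Turing in
def confStep {Γ Λ : Type} (M : Λ → Γ → Option (Λ × TM0.Stmt Γ)) (c : Conf Γ Λ) :
    Option (Conf Γ Λ) :=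
  match M c.q (c.τ c.h) with
  | none => none
  | some (q', TM0.Stmt.move Dir.left) => some ⟨q', c.h - 1, c.τ⟩
  | some (q', TM0.Stmt.move Dir.right) => some ⟨q', c.h + 1, c.τ⟩
  | some (q', TM0.Stmt.write a) => some ⟨q', c.h, Function.update c.τ c.h a⟩

def Conf.sym {Γ Λ : Type} (c : Conf Γ Λ) (P : ℤ) : Γ × Option Λ :=
  (c.τ P, if P = c.h then some c.q else none)

open Turing in
def arrL {Γ Λ : Type} (M : Λ → Γ → Option (Λ × TM0.Stmt Γ)) (x : Γ × Option Λ) : Option Λ :=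
  match x.2 with
  | none => none
  | some q => match M q x.1 with
    | some (q', TM0.Stmt.move Dir.left) => some q'
    | _ => none

open Turing in
def arrR {Γ Λ : Type} (M : Λ → Γ → Option (Λ × TM0.Stmt Γ)) (x : Γ × Option Λ) : Option Λ :=
  match x.2 with
  | none => none
  | some q => match M q x.1 with
    | some (q', TM0.Stmt.move Dir.right) => some q'
    | _ => none

open Turing in
def locRule {Γ Λ : Type} (M : Λ → Γ → Option (Λ × TM0.Stmt Γ)) (l c r : Γ × Option Λ) :
    Γ × Option Λ :=
  match c.2 with
  | none => (c.1, match arrR M l with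
    | some q => some q
    | none => arrL M r)
  | some q => match M q c.1 with
    | some (q', TM0.Stmt.write a) => (a, some q')
    | _ => (c.1, none)

lemma confStep_h {Γ Λ : Type} (M : Λ → Γ → Option (Λ × Turing.TM0.Stmt Γ)) {c c' : Conf Γ Λ}
    (h : confStep M c = some c') : |c'.h - c.h| ≤ 1 := by
  unfold confStep at h
  split at h <;> simp at h <;> subst h <;> simp

lemma locRule_sym {Γ Λ : Type} (M : Λ → Γ → Option (Λ × Turing.TM0.Stmt Γ)) {c c' : Conf Γ Λ}
    (h : confStep M c = some c') (P : ℤ) :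
    locRule M (c.sym (P - 1)) (c.sym P) (c.sym (P + 1)) = c'.sym P := by
  obtain ⟨q, H, τ⟩ := c
  by_cases h1 : P = H
  · subst h1
    simp only [confStep] at h
    unfold locRule
    simp only [Conf.sym, if_true]
    split at h <;> rename_i e <;> simp at h <;> subst h <;> simp [e] <;> omega
  · unfold locRule
    simp only [confStep] at h
    simp only [Conf.sym, if_neg h1]
    by_cases h2 : P - 1 = H
    · subst h2
      have : ¬ (P + 1 = P - 1) := by omega
      split at h <;> rename_i e <;> simp at h <;> subst h <;> simp [arrR, arrL, e, this] <;>
        first | omega | (rw [Function.update_of_ne h1]; simp; omega)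
    by_cases h3 : P + 1 = H
    · subst h3
      have : ¬ (P - 1 = P + 1) := by omega
      split at h <;> rename_i e <;> simp at h <;> subst h <;> simp [arrR, arrL, e, this] <;> omega
    split at h <;> rename_i e <;> simp at h <;> subst h <;> simp [arrR, arrL, h1, h2, h3] <;> omega

inductive Tag | run | left | seed | inp

instance : Finite Tag := by
  refine Finite.of_injective (β := Fin 4) (fun t => match t with
    | .run => 0 | .left => 1 | .seed => 2 | .inp => 3) ?_
  rintro ⟨⟩ ⟨⟩ h <;> simp at h <;> rfl

def tagOK : Tag → Tag → Prop
  | .left, .left => True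
  | .left, .seed => True
  | .seed, .inp => True
  | .inp, .inp => True
  | .run, .run => True
  | _, _ => False

structure TCell (Γ Λ : Type) where
  a : Γ × Option Λ
  b : Γ × Option Λ
  c : Γ × Option Λ
  t : Tag

instance {Γ Λ : Type} [Inhabited Γ] : Inhabited (TCell Γ Λ) :=
  ⟨⟨(default, none), (default, none), (default, none), .run⟩⟩

instance {Γ Λ : Type} [Finite Γ] [Finite Λ] : Finite (TCell Γ Λ) := by
  refine Finite.of_injective (β := (Γ × Option Λ) × (Γ × Option Λ) × (Γ × Option Λ) × Tag)
    (fun c => (c.a, c.b, c.c, c.t)) ?_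
  rintro ⟨⟩ ⟨⟩ h
  simp only [Prod.mk.injEq] at h
  simp [h]

structure TH {Γ Λ : Type} [Inhabited Γ] [Inhabited Λ] (d d' : TCell Γ Λ) : Prop where
  bc : d.b = d'.a
  cb : d.c = d'.b
  tag : tagOK d.t d'.t
  left : d'.t = .left → d'.b = (default, none)
  seed : d'.t = .seed → d'.b.2 = some default
  inp : d'.t = .inp → d'.b.2 = none

def tmSpec {Γ Λ : Type} [Inhabited Γ] [Inhabited Λ] (M : Λ → Γ → Option (Λ × Turing.TM0.Stmt Γ))
    (enc : Γ → ℕ) : DSpec (TCell Γ Λ) where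
  HD := TH
  VD d d' := d'.t = .run ∧ (∀ q, d.b.2 = some q → M q d.b.1 ≠ none) ∧ d'.b = locRule M d.a d.b d.c
  Init _ := True
  Seed d := d.t = .seed ∧ d.b.2 = some default
  op d := match d.t with
    | .run => 0
    | .left => 1
    | .seed => 1
    | .inp => 2
  inp d := match d.t with
    | .run => none
    | .left => none
    | .seed => some (enc d.b.1)
    | .inp => some (enc d.b.1)

def initConf {Γ Λ : Type} [Inhabited Γ] [Inhabited Λ] (l : List Γ) : Conf Γ Λ :=
  ⟨default, 0, fun P => if 0 ≤ P then l.getI P.toNat else default⟩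

lemma getD_map_enc {Γ : Type} [Inhabited Γ] (enc : Γ → ℕ) (he0 : enc default = 0) (l : List Γ)
    (p : ℕ) : (l.map enc).getD (min p l.length) 0 = enc (l.getI p) := by
  rcases lt_or_ge p l.length with h | h
  · rw [min_eq_left h.le, List.getI_eq_getElem _ h]
    simp [List.getD, h]
  · rw [min_eq_right h, List.getI_eq_default _ h, he0]
    simp [List.getD]

theorem tm_exist {Γ Λ : Type} [Inhabited Γ] [Inhabited Λ] [Finite Γ] [Finite Λ]
    (M : Λ → Γ → Option (Λ × Turing.TM0.Stmt Γ))
    (enc : Γ → ℕ) (he0 : enc default = 0) (l : List Γ) (c : ℕ → Conf Γ Λ)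
    (c0 : c 0 = initConf l) (hc : ∀ T, confStep M (c T) = some (c (T + 1))) :
    (hier (tmSpec M enc)).Tiles (l.map enc) := by
  let D : ℤ → ℕ → TCell Γ Λ := fun P T => ⟨(c T).sym (P - 1), (c T).sym P, (c T).sym (P + 1),
    if T ≠ 0 then .run else if P < 0 then .left else if P = 0 then .seed else .inp⟩
  have hD1 : ∀ P T, TH (D (P - 1) T) (D P T) := by
    intro P T
    refine ⟨rfl, by simp [D], ?_, ?_, ?_, ?_⟩
    · simp only [D]
      split_ifs <;> first | omega | trivial
    · simp only [D]
      split_ifs with h1 h2 h3 <;> simp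
      simp at h1
      subst h1
      rw [c0]
      have e1 : ¬ (0 ≤ P) := by omega
      have e2 : P ≠ 0 := by omega
      simp [Conf.sym, initConf, e1, e2]
    · simp only [D]
      split_ifs with h1 h2 h3 <;> simp
      simp at h1
      subst h1
      rw [c0]
      simp [Conf.sym, initConf, h3]
    · simp only [D]
      split_ifs with h1 h2 h3 <;> simp
      simp at h1
      subst h1
      rw [c0]
      simp [Conf.sym, initConf, h3]
  have hD2 : ∀ P T, (tmSpec M enc).VD (D P T) (D P (T + 1)) := by
    intro P T
    refine ⟨by simp [D], ?_, ?_⟩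
    · intro q hq h
      simp only [D, Conf.sym] at hq h
      have hh := hc T
      unfold confStep at hh
      split_ifs at hq with h1
      simp at hq
      subst h1
      rw [hq, h] at hh
      simp at hh
    · simp only [D]
      rw [locRule_sym M (hc T)]
  have hpos : ∀ k : ℕ, (0:ℤ) < 2 ^ k := fun k => by positivity
  have hmod : ∀ (k : ℕ) (i : ℤ), ¬ (4 * 2 ^ k ∣ i) →
      (i - 1) % (4 * 2 ^ k) = i % (4 * 2 ^ k) - 1 := by
    intro k i h
    have hk := hpos k
    generalize (2:ℤ) ^ k = b at *
    have h1 := Int.emod_nonneg i (show 4 * b ≠ 0 by omega)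
    have h2 := Int.emod_lt_of_pos i (show 0 < 4 * b by omega)
    have h3 : i % (4 * b) ≠ 0 := fun h' => h (Int.dvd_of_emod_eq_zero h')
    rw [Int.sub_emod, Int.emod_eq_of_lt (a := 1) (by omega) (by omega),
      Int.emod_eq_of_lt (by omega) (by omega)]
  refine hier_exist (tmSpec M enc) (l.map enc)
    (fun b i j => D (i % (4 * b) - 2 * b) (j % (4 * b)).toNat)
    (fun b i j => if j % (4 * b) = 0 then min (i % (4 * b) - 2 * b).toNat l.length else 0)
    ?_ ?_ ?_ ?_ ?_ ?_
  · intro k i j h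
    rw [hmod k i h, show i % (4 * 2 ^ k) - 1 - 2 * 2 ^ k = i % (4 * 2 ^ k) - 2 * 2 ^ k - 1 by ring]
    exact hD1 _ _
  · intro k i j h
    have h1 := Int.emod_nonneg j (show 4 * (2:ℤ) ^ k ≠ 0 by positivity)
    have h3 : j % (4 * 2 ^ k) ≠ 0 := fun h' => h (Int.dvd_of_emod_eq_zero h')
    rw [hmod k j h, show (j % (4 * 2 ^ k)).toNat = (j % (4 * 2 ^ k) - 1).toNat + 1 by omega]
    exact hD2 _ _
  · intros
    trivial
  · intro k i j h1 h2
    rw [Int.emod_eq_zero_of_dvd h1]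
    have : i % (4 * 2 ^ k) - 2 * 2 ^ k = 0 := by
      have hk := hpos k
      have := (Int.emod_emod_of_dvd i (dvd_refl (4 * (2:ℤ)^k)))
      obtain ⟨e, he⟩ := h2
      have : i = 2 * 2 ^ k + 4 * 2 ^ k * e := by linarith
      rw [this, Int.add_mul_emod_self_left, Int.emod_eq_of_lt (by omega) (by omega)]
      ring
    rw [this]
    refine ⟨by simp [D], ?_⟩
    simp [D, c0, Conf.sym, initConf]
  · intro k i j
    have hk := hpos k
    have hm := hmod k i
    generalize (2:ℤ) ^ k = b at *
    by_cases hj : j % (4 * b) = 0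
    · rw [if_pos hj, if_pos hj, hj]
      generalize hP : i % (4 * b) - 2 * b = P
      refine ⟨⟨?_, ?_, ?_⟩, ?_⟩
      · simp only [tmSpec, D]
        split_ifs <;> simp at *
      · simp only [tmSpec, D]
        split_ifs with h1 h2 h3 <;> simp at *
        · left; omega
        · left; omega
      · simp only [tmSpec, D]
        split_ifs with h1 h2 h3 <;> simp at *
        rw [hm (fun h => by have := Int.emod_eq_zero_of_dvd h; omega)]
        omega
      · intro σ
        simp only [tmSpec, D]
        have hg : 0 ≤ P → (l.map enc).getD (min P.toNat l.length) 0 = enc ((c 0).sym P).1 := by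
          intro h
          rw [getD_map_enc enc he0, c0]
          simp [Conf.sym, initConf, h]
        split_ifs with h1 h2 h3 <;> simp only [reduceCtorEq, false_imp_iff, Option.some.injEq]
        · rintro rfl; exact hg (by omega)
        · rintro rfl; exact hg (by omega)
    · rw [if_neg hj, if_neg hj]
      have h1 := Int.emod_nonneg j (show 4 * b ≠ 0 by omega)
      have : (j % (4 * b)).toNat ≠ 0 := by omega
      refine ⟨⟨fun _ => rfl, ?_, ?_⟩, ?_⟩ <;> simp [tmSpec, D, this]
  · intro b i j
    simp only [List.length_map]
    split_ifs <;> omega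

theorem tm_force {Γ Λ : Type} [Inhabited Γ] [Inhabited Λ] [Finite Γ] [Finite Λ]
    (M : Λ → Γ → Option (Λ × Turing.TM0.Stmt Γ))
    (enc : Γ → ℕ) (hinj : Function.Injective enc) (he0 : enc default = 0) (l : List Γ)
    (hT : (hier (tmSpec M enc)).Tiles (l.map enc)) (N : ℕ) :
    ∃ c : Conf Γ Λ, (fun o => o.bind (confStep M))^[N] (some (initConf l)) = some c := by
  have hst := stage_all (hier_force _ _ hT) N
  obtain ⟨d, r, hH, hV, -, hS, hQ, -⟩ := stage_box hst
  have hN : (N:ℤ) < 2 ^ N := by exact_mod_cast Nat.lt_two_pow_self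
  generalize (2:ℤ) ^ N = n at *
  clear hst
  have hS' : (d (2 * n) 0).t = .seed ∧ (d (2 * n) 0).b.2 = some default := hS
  -- row zero
  have hleft : ∀ p : ℕ, (p:ℤ) + 1 ≤ 2 * n → (d (2 * n - 1 - p) 0).t = .left := by
    intro p
    induction p with
    | zero =>
      intro h
      have h1 := (hH (2 * n) 0 (by omega) (by omega)).tag
      rw [hS'.1] at h1
      simp only [Nat.cast_zero, sub_zero]
      generalize (d (2 * n - 1) 0).t = t at h1
      cases t <;> simp [tagOK] at h1 <;> rfl
    | succ p ih =>
      intro h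
      push_cast at h
      have h1 := (hH (2 * n - 1 - p) 0 (by omega) (by omega)).tag
      rw [ih (by omega)] at h1
      push_cast
      rw [show 2 * n - 1 - ((p:ℤ) + 1) = 2 * n - 1 - p - 1 by ring]
      generalize (d (2 * n - 1 - p - 1) 0).t = t at h1
      cases t <;> simp [tagOK] at h1 <;> rfl
  have hright : ∀ p : ℕ, (p:ℤ) + 1 < 2 * n → (d (2 * n + 1 + p) 0).t = .inp := by
    intro p
    induction p with
    | zero =>
      intro h
      have h1 := (hH (2 * n + 1) 0 (by omega) (by push_cast at h; omega)).tag
      rw [show 2 * n + 1 - 1 = 2 * n by ring, hS'.1] at h1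
      simp only [Nat.cast_zero, add_zero]
      generalize (d (2 * n + 1) 0).t = t at h1
      cases t <;> simp [tagOK] at h1 <;> rfl
    | succ p ih =>
      intro h
      push_cast at h
      have h1 := (hH (2 * n + 1 + (p + 1)) 0 (by omega) (by omega)).tag
      rw [show 2 * n + 1 + ((p:ℤ) + 1) - 1 = 2 * n + 1 + p by ring, ih (by omega)] at h1
      push_cast
      generalize (d (2 * n + 1 + (p + 1)) 0).t = t at h1
      cases t <;> simp [tagOK] at h1 <;> rfl
  have hr : ∀ p : ℕ, (p:ℤ) < 2 * n → r (2 * n + p) 0 = min p l.length := by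
    intro p
    induction p with
    | zero =>
      intro h
      have := (hQ (2 * n) 0).1.2.1 (by simp [tmSpec, hS'.1])
      simpa using this
    | succ p ih =>
      intro h
      push_cast at h
      have h1 := hright p (by omega)
      have := (hQ (2 * n + 1 + p) 0).1.2.2 (by simp [tmSpec, h1])
      push_cast
      rw [show 2 * n + ((p:ℤ) + 1) = 2 * n + 1 + p by ring, this,
        show 2 * n + 1 + (p:ℤ) - 1 = 2 * n + p by ring, ih (by omega)]
      simp
      omega
  have hrow0 : ∀ i : ℤ, 1 ≤ i → i ≤ 4 * n - 1 → (d i 0).b = (initConf l : Conf Γ Λ).sym (i - 2 * n) := by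
    intro i h1 h2
    rcases lt_trichotomy i (2 * n) with h | h | h
    · obtain ⟨p, hp⟩ := Int.eq_ofNat_of_zero_le (show 0 ≤ 2 * n - 1 - i by omega)
      have ht := hleft p (by omega)
      rw [← hp, show 2 * n - 1 - (2 * n - 1 - i) = i by ring] at ht
      rw [(hH i 0 (by omega) (by omega)).left ht]
      have e1 : ¬ (0 ≤ i - 2 * n) := by omega
      have e2 : ¬ (i - 2 * n = 0) := by omega
      simp [Conf.sym, initConf, e2]
      omega
    · subst h
      have hh := (hQ (2 * n) 0).2 (enc (d (2 * n) 0).b.1) (by simp [tmSpec, hS'.1])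
      have := hr 0 (by push_cast; omega)
      simp only [Nat.cast_zero, add_zero] at this
      rw [this, getD_map_enc enc he0] at hh
      have hh := hinj hh
      ext1
      · simp [Conf.sym, initConf, hh]
      · simp [Conf.sym, initConf, hS'.2]
    · obtain ⟨p, hp⟩ := Int.eq_ofNat_of_zero_le (show 0 ≤ i - 2 * n - 1 by omega)
      have ht := hright p (by omega)
      rw [show 2 * n + 1 + (p:ℤ) = i by omega] at ht
      have h5 := (hH i 0 (by omega) (by omega)).inp ht
      have hh := (hQ i 0).2 (enc (d i 0).b.1) (by simp [tmSpec, ht])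
      have := hr (p + 1) (by push_cast; omega)
      rw [show 2 * n + ((p + 1 : ℕ):ℤ) = i by push_cast; omega] at this
      rw [this, getD_map_enc enc he0] at hh
      have hh := hinj hh
      have e1 : (0 ≤ i - 2 * n) := by omega
      have e2 : ¬ (i - 2 * n = 0) := by omega
      have e3 : (i - 2 * n).toNat = p + 1 := by omega
      ext1
      · simp only [Conf.sym, initConf, e1, if_true, e3, hh]
      · simp [Conf.sym, initConf, h5, e2]
  -- induction over time
  have key : ∀ t : ℕ, t ≤ N → ∃ c : Conf Γ Λ,
      (fun o => o.bind (confStep M))^[t] (some (initConf l)) = some c ∧ |c.h| ≤ t ∧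
      ∀ i : ℤ, 1 + t ≤ i → i ≤ 4 * n - 1 - t → (d i t).b = c.sym (i - 2 * n) := by
    intro t
    induction t with
    | zero =>
      intro _
      refine ⟨initConf l, rfl, by simp [initConf], ?_⟩
      intro i h1 h2
      exact hrow0 i (by simpa using h1) (by simpa using h2)
    | succ t ih =>
      intro ht
      obtain ⟨c, hc, hh, hsym⟩ := ih (by omega)
      have habs := abs_le.1 hh
      have htn : (t:ℤ) + 1 < n := by omega
      have hV' : ∀ i, (tmSpec M enc).VD (d i t) (d i (t + 1)) := by
        intro i
        have := hV i (t + 1) (by omega) (by omega)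
        simpa using this
      have hne : M c.q (c.τ c.h) ≠ none := by
        have hb := hsym (c.h + 2 * n) (by omega) (by omega)
        rw [show c.h + 2 * n - 2 * n = c.h by ring] at hb
        have := (hV' (c.h + 2 * n)).2.1 c.q (by rw [hb]; simp [Conf.sym])
        rw [hb] at this
        exact this
      obtain ⟨c', hc'⟩ : ∃ c', confStep M c = some c' := by
        unfold confStep
        split
        · contradiction
        all_goals exact ⟨_, rfl⟩
      refine ⟨c', ?_, ?_, ?_⟩
      · rw [Function.iterate_succ_apply', hc]
        simpa using hc'
      · have := confStep_h M hc'
        push_cast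
        have := abs_le.1 this
        rw [abs_le]
        constructor <;> omega
      · intro i h1 h2
        push_cast at h1 h2 ⊢
        rw [(hV' i).2.2, hsym i (by omega) (by omega), ← locRule_sym M hc']
        have e1 := (hH i t (by omega) (by omega)).bc
        have e2 := (hH (i + 1) t (by omega) (by omega)).cb
        rw [hsym (i - 1) (by omega) (by omega)] at e1
        rw [show i + 1 - 1 = i by ring, hsym (i + 1) (by omega) (by omega)] at e2
        rw [← e1, e2]
        congr 2 <;> ring
  obtain ⟨c, hc, -⟩ := key N le_rfl
  exact ⟨c, hc⟩


/-! ### From evaluation to tilings -/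

lemma iter_bind_none {σ : Type} (f : σ → Option σ) (n : ℕ) :
    (fun o : Option σ => o.bind f)^[n] none = none := by
  induction n with
  | zero => rfl
  | succ n ih => rw [Function.iterate_succ_apply', ih]; rfl

lemma reaches_of_iter {σ : Type} (f : σ → Option σ) (a : σ) (n : ℕ) : ∀ b,
    (fun o : Option σ => o.bind f)^[n] (some a) = some b → StateTransition.Reaches f a b := by
  induction n with
  | zero => intro b h; simp at h; subst h; exact Relation.ReflTransGen.refl
  | succ n ih =>
    intro b h
    rw [Function.iterate_succ_apply'] at h
    obtain ⟨c, hc, hb⟩ := Option.bind_eq_some_iff.1 h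
    exact (ih c hc).tail hb

lemma iter_of_reaches {σ : Type} (f : σ → Option σ) (a b : σ) (h : StateTransition.Reaches f a b) :
    ∃ n, (fun o : Option σ => o.bind f)^[n] (some a) = some b := by
  induction h with
  | refl => exact ⟨0, rfl⟩
  | tail _ h2 ih =>
    obtain ⟨n, hn⟩ := ih
    refine ⟨n + 1, ?_⟩
    rw [Function.iterate_succ_apply', hn]
    exact h2

lemma eval_dom_iff {σ : Type} (f : σ → Option σ) (a : σ) :
    (StateTransition.eval f a).Dom ↔ ∃ n, (fun o : Option σ => o.bind f)^[n] (some a) = none := by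
  constructor
  · intro h
    obtain ⟨h1, h2⟩ := StateTransition.mem_eval.1 (Part.get_mem h)
    obtain ⟨n, hn⟩ := iter_of_reaches f _ _ h1
    refine ⟨n + 1, ?_⟩
    rw [Function.iterate_succ_apply', hn]
    exact h2
  · rintro ⟨n, hn⟩
    induction n with
    | zero => simp at hn
    | succ n ih =>
      rw [Function.iterate_succ_apply'] at hn
      rcases hb : (fun o : Option σ => o.bind f)^[n] (some a) with _ | b
      · exact ih hb
      · rw [hb] at hn
        exact Part.dom_iff_mem.2 ⟨b, StateTransition.mem_eval.2 ⟨reaches_of_iter f a n b hb, hn⟩⟩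

theorem tm_iff {Γ Λ : Type} [Inhabited Γ] [Inhabited Λ] [Finite Γ] [Finite Λ]
    (M : Λ → Γ → Option (Λ × Turing.TM0.Stmt Γ))
    (enc : Γ → ℕ) (hinj : Function.Injective enc) (he0 : enc default = 0) (l : List Γ) :
    (hier (tmSpec M enc)).Tiles (l.map enc) ↔
      ¬ (StateTransition.eval (confStep M) (initConf l)).Dom := by
  rw [eval_dom_iff]
  constructor
  · rintro h ⟨n, hn⟩
    obtain ⟨c, hc⟩ := tm_force M enc hinj he0 l h n
    rw [hn] at hc
    simp at hc
  · intro h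
    have : ∀ n, ∃ c, (fun o : Option (Conf Γ Λ) => o.bind (confStep M))^[n] (some (initConf l)) = some c := by
      intro n
      rcases hb : (fun o : Option (Conf Γ Λ) => o.bind (confStep M))^[n] (some (initConf l)) with _ | b
      · exact absurd ⟨n, hb⟩ h
      · exact ⟨b, rfl⟩
    choose c hc using this
    refine tm_exist M enc he0 l c ?_ ?_
    · have := hc 0
      simpa using this.symm
    · intro T
      have := hc (T + 1)
      rw [Function.iterate_succ_apply', hc T] at this
      simpa using this

lemma conf_respects {Γ Λ : Type} [Inhabited Γ] [Inhabited Λ] (M : Turing.TM0.Machine Γ Λ) :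
    StateTransition.Respects (Turing.TM0.step M) (confStep M)
      (fun c d => d.q = c.q ∧ ∀ P, d.τ P = c.Tape.nth (P - d.h)) := by
  rintro ⟨q, T⟩ ⟨q', h, τ⟩ ⟨h1, h2⟩
  simp only at h1 h2
  subst h1
  have h0 : τ h = T.1 := by rw [h2, sub_self, Turing.Tape.nth_zero]
  unfold Turing.TM0.step
  simp only
  rcases hM : M q' T.1 with _ | ⟨q1, s⟩
  · show confStep M _ = none
    simp [confStep, h0, hM]
  · show ∃ b₂ : Conf Γ Λ, (b₂.q = q1 ∧ ∀ P, b₂.τ P = Turing.Tape.nth _ (P - b₂.h)) ∧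
        StateTransition.Reaches₁ (confStep M) { q := q', h := h, τ := τ } b₂
    rcases s with (_ | _) | a
    · refine ⟨⟨q1, h - 1, τ⟩, ⟨rfl, ?_⟩, Relation.TransGen.single ?_⟩
      · intro P
        simp only
        rw [Turing.Tape.move_left_nth, h2]
        congr 1; ring
      · simp [confStep, h0, hM]
    · refine ⟨⟨q1, h + 1, τ⟩, ⟨rfl, ?_⟩, Relation.TransGen.single ?_⟩
      · intro P
        simp only
        rw [Turing.Tape.move_right_nth, h2]
        congr 1; ring
      · simp [confStep, h0, hM]
    · refine ⟨⟨q1, h, Function.update τ h a⟩, ⟨rfl, ?_⟩, Relation.TransGen.single ?_⟩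
      · intro P
        simp only
        rw [Turing.Tape.write_nth]
        by_cases hP : P = h
        · subst hP; simp
        · rw [Function.update_of_ne hP, if_neg (by omega), h2]
      · simp [confStep, h0, hM]

theorem tm0_iff {Γ Λ : Type} [Inhabited Γ] [Inhabited Λ] [Finite Γ] [Finite Λ]
    (M : Turing.TM0.Machine Γ Λ)
    (enc : Γ → ℕ) (hinj : Function.Injective enc) (he0 : enc default = 0) (l : List Γ) :
    (hier (tmSpec M enc)).Tiles (l.map enc) ↔ ¬ (Turing.TM0.eval M l).Dom := by
  rw [tm_iff M enc hinj he0 l]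
  have := StateTransition.tr_eval_dom (conf_respects M) (a₁ := Turing.TM0.init l)
    (a₂ := initConf l) ⟨rfl, ?_⟩
  · rw [this]; rfl
  · intro P
    simp only [initConf, Turing.TM0.init, Turing.Tape.mk₁, Turing.Tape.mk₂, sub_zero]
    split_ifs with h
    · obtain ⟨p, rfl⟩ := Int.eq_ofNat_of_zero_le h
      rw [Turing.Tape.mk'_nth_nat, Turing.ListBlank.nth_mk]
      rfl
    · obtain ⟨p, rfl⟩ : ∃ p : ℕ, P = -(p+1 : ℕ) := ⟨(-P - 1).toNat, by omega⟩
      show default = (Turing.ListBlank.mk ([] : List Γ)).nth p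
      simp [Turing.ListBlank.nth_mk]

/-- restricting to a finite set of states -/
theorem tm0_finite {Γ Λ : Type} [Inhabited Γ] [Inhabited Λ] 
    (M : Turing.TM0.Machine Γ Λ) (S : Set Λ) (hS : S.Finite) (ss : Turing.TM0.Supports M S) :
    ∃ (Λ' : Type) (_ : Finite Λ') (_ : Inhabited Λ') (M' : Turing.TM0.Machine Γ Λ'),
      ∀ l, (Turing.TM0.eval M' l).Dom ↔ (Turing.TM0.eval M l).Dom := by
  classical
  letI : Inhabited S := ⟨⟨default, ss.1⟩⟩
  let g₁ : Turing.PointedMap Λ S := ⟨fun q => if h : q ∈ S then ⟨q, h⟩ else default, by simp [ss.1]; rfl⟩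
  let i : Turing.PointedMap Γ Γ := ⟨id, rfl⟩
  have hg : ∀ q ∈ S, (g₁ q : Λ) = q := by
    intro q hq
    show ((if h : q ∈ S then (⟨q, h⟩ : S) else default : S) : Λ) = q
    rw [dif_pos hq]
  refine ⟨S, hS, inferInstance, Turing.TM0.Machine.map M i i g₁ Subtype.val, ?_⟩
  intro l
  have := StateTransition.tr_eval_dom (Turing.TM0.Machine.map_respects M i i g₁ Subtype.val ss (fun _ => rfl) hg)
    (a₁ := Turing.TM0.init l) (a₂ := Turing.TM0.init l) ⟨ss.1, ?_⟩
  · exact this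
  · have h := Turing.TM0.map_init i g₁ l
    have hl : List.map i l = l := List.map_id l
    rw [hl] at h
    exact h


/-! ### An undecidable family of tiling problems -/

open Turing PartrecToTM2 in
lemma trNat_rec (n : ℕ) : trNat n = if n = 0 then [] else
    (if n % 2 = 0 then Γ'.bit0 else Γ'.bit1) :: trNat (n / 2) := by
  obtain ⟨x, rfl⟩ : ∃ x : Num, n = (x : ℕ) := ⟨(n : Num), by simp⟩
  have key : ∀ p : PosNum, trNat (p : ℕ) = trPosNum p := by
    intro p
    have := Num.of_to_nat (Num.pos p)
    unfold trNat
    rw [show ((p : ℕ) : Num) = Num.pos p from this]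
    rfl
  rcases x with _ | p
  · simp
  · have hp : ((Num.pos p : Num) : ℕ) = (p : ℕ) := rfl
    rw [hp, if_neg (PosNum.to_nat_pos p).ne', key]
    rcases p with _ | q | q
    · simp [trPosNum]
    · have e : ((PosNum.bit1 q : PosNum) : ℕ) = 2 * (q : ℕ) + 1 := by
        rw [PosNum.cast_bit1]; push_cast; ring
      rw [e, show (2 * (q:ℕ) + 1) / 2 = q by omega, if_neg (by omega), key]
      rfl
    · have e : ((PosNum.bit0 q : PosNum) : ℕ) = 2 * (q : ℕ) := by
        rw [PosNum.cast_bit0]; push_cast; ring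
      rw [e, show (2 * (q:ℕ)) / 2 = q by omega, if_pos (by omega), key]
      rfl

open Turing PartrecToTM2 in
lemma trNat_primrec (e : Γ' → ℕ) : Primrec (fun n => (trNat n).map e) := by
  have : Primrec₂ (fun (_ : Unit) n => (trNat n).map e) := by
    refine Primrec.nat_strong_rec _ (g := fun _ L => if L.length = 0 then some [] else
      (L[L.length / 2]?).map (fun t => (if L.length % 2 = 0 then e Γ'.bit0 else e Γ'.bit1) :: t)) ?_ ?_
    · have hlen : Primrec (fun p : Unit × List (List ℕ) => p.2.length) :=
        Primrec.list_length.comp Primrec.snd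
      refine Primrec.ite (Primrec.eq.comp hlen (Primrec.const 0)) (Primrec.const _) ?_
      refine Primrec.option_map (Primrec.list_getElem?.comp Primrec.snd
        (Primrec.nat_div.comp hlen (Primrec.const 2))) ?_
      refine Primrec.list_cons.comp ?_ Primrec.snd
      refine Primrec.ite (Primrec.eq.comp (Primrec.nat_mod.comp (hlen.comp Primrec.fst)
        (Primrec.const 2)) (Primrec.const 0)) (Primrec.const _) (Primrec.const _)
    · intro _ n
      simp only [List.length_map, List.length_range]
      rw [trNat_rec n]
      split_ifs with h1 h2
      · simp
      all_goals
        have : n / 2 < n := Nat.div_lt_self (by omega) (by norm_num)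
        simp [this]
  exact this.comp (Primrec.const ()) Primrec.id

lemma exists_enc (Γ : Type) [Finite Γ] [Inhabited Γ] :
    ∃ enc : Γ → ℕ, Function.Injective enc ∧ enc default = 0 := by
  obtain ⟨n, ⟨e⟩⟩ := Finite.exists_equiv_fin Γ
  refine ⟨fun x => Equiv.swap ((e default : Fin n) : ℕ) 0 (e x : Fin n), ?_, ?_⟩
  · intro x y h
    have := (Equiv.swap ((e default : Fin n) : ℕ) 0).injective h
    exact e.injective (Fin.ext this)
  · simp

open Turing in
instance finite_K' : Finite PartrecToTM2.K' := by
  refine Finite.of_injective (β := Fin 4) (fun t => match t with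
    | .main => 0 | .rev => 1 | .aux => 2 | .stack => 3) ?_
  rintro ⟨⟩ ⟨⟩ h <;> simp at h <;> rfl

open Turing in
theorem berger : ∃ (S : CSys) (ℓ : ℕ → List ℕ), Primrec ℓ ∧
    ¬ ComputablePred (fun n => S.Tiles (ℓ n)) := by
  classical
  -- the universal code
  have hU : Partrec (fun n : ℕ => (Nat.Partrec.Code.eval (Denumerable.ofNat Nat.Partrec.Code n) 0)) :=
    Nat.Partrec.Code.eval_part.comp (Computable.ofNat _) (Computable.const 0)
  obtain ⟨c, hc⟩ := ToPartrec.Code.exists_code (Nat.Partrec'.part_iff₁.2 hU)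
  letI inh : Inhabited PartrecToTM2.Λ' := ⟨PartrecToTM2.trNormal c PartrecToTM2.Cont'.halt⟩
  have h2 : ∀ n : ℕ, (TM2.eval PartrecToTM2.tr PartrecToTM2.K'.main (PartrecToTM2.trList [n])).Dom ↔
      (Nat.Partrec.Code.eval (Denumerable.ofNat Nat.Partrec.Code n) 0).Dom := by
    intro n
    have e1 : (TM2.init PartrecToTM2.K'.main (PartrecToTM2.trList [n]) :
        TM2.Cfg (fun _ : PartrecToTM2.K' => PartrecToTM2.Γ') PartrecToTM2.Λ' (Option PartrecToTM2.Γ')) =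
        PartrecToTM2.init c [n] := by
      unfold TM2.init PartrecToTM2.init
      congr 1
      funext k
      cases k <;> rfl
    have e2 := PartrecToTM2.tr_eval c [n]
    have e3 := hc ⟨[n], rfl⟩
    unfold TM2.eval
    rw [e1]
    show (StateTransition.eval (TM2.step PartrecToTM2.tr) (PartrecToTM2.init c [n])).Dom ↔ _
    rw [e2, e3]
    rfl
  have ss2 := PartrecToTM2.tr_supports c PartrecToTM2.Cont'.halt
  have ss1 := TM2to1.tr_supports PartrecToTM2.tr ss2
  have ss0 := TM1to0.tr_supports _ ss1
  obtain ⟨Λ, hf, hi, M, hM⟩ := tm0_finite _ _ (Finset.finite_toSet _) ss0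
  haveI : Finite (TM2to1.Γ' PartrecToTM2.K' (fun _ => PartrecToTM2.Γ')) :=
    inferInstanceAs (Finite (Bool × (∀ _ : PartrecToTM2.K', Option PartrecToTM2.Γ')))
  obtain ⟨enc, hinj, he0⟩ := exists_enc (TM2to1.Γ' PartrecToTM2.K' (fun _ => PartrecToTM2.Γ'))
  refine ⟨hier (tmSpec M enc), fun n =>
    (TM2to1.trInit PartrecToTM2.K'.main (PartrecToTM2.trList [n])).map enc, ?_, ?_⟩
  · let e : PartrecToTM2.Γ' → ℕ := fun a => enc (false, Function.update (fun _ => none) PartrecToTM2.K'.main (some a))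
    have : Primrec (fun n => enc (true, Function.update (fun _ => none) PartrecToTM2.K'.main (some PartrecToTM2.Γ'.cons)) ::
        ((PartrecToTM2.trNat n).map e).reverse) :=
      Primrec.list_cons.comp (Primrec.const _) (Primrec.list_reverse.comp (trNat_primrec e))
    refine this.of_eq ?_
    intro n
    have hl : (PartrecToTM2.trList [n]).reverse =
        PartrecToTM2.Γ'.cons :: (PartrecToTM2.trNat n).reverse := by
      simp [PartrecToTM2.trList]
    unfold TM2to1.trInit
    rw [hl]
    let g : PartrecToTM2.Γ' → TM2to1.Γ' PartrecToTM2.K' (fun _ => PartrecToTM2.Γ') :=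
      fun a => (false, Function.update (fun _ => none) PartrecToTM2.K'.main (some a))
    have h5 : ((PartrecToTM2.trNat n).map e).reverse =
        List.map enc (List.map g (PartrecToTM2.trNat n).reverse) := by
      rw [List.map_map, ← List.map_reverse]
      rfl
    exact congrArg (List.cons _) h5
  · intro hcomp
    have hiff : ∀ n, (hier (tmSpec M enc)).Tiles
        ((TM2to1.trInit PartrecToTM2.K'.main (PartrecToTM2.trList [n])).map enc) ↔
        ¬ (Nat.Partrec.Code.eval (Denumerable.ofNat Nat.Partrec.Code n) 0).Dom := by
      intro n
      rw [tm0_iff M enc hinj he0, hM, TM1to0.tr_eval]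
      exact not_congr ((TM2to1.tr_eval_dom PartrecToTM2.tr PartrecToTM2.K'.main
        (PartrecToTM2.trList [n])).trans (h2 n))
    have hcomp2 : ComputablePred (fun n : ℕ =>
        ¬ (Nat.Partrec.Code.eval (Denumerable.ofNat Nat.Partrec.Code n) 0).Dom) :=
      hcomp.of_eq (fun n => hiff n)
    apply ComputablePred.halting_problem 0
    have h3 := hcomp2.not
    obtain ⟨f, hf, hfe⟩ := ComputablePred.computable_iff.1 h3
    refine ComputablePred.computable_iff.2 ⟨fun c => f (Encodable.encode c), hf.comp Computable.encode, ?_⟩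
    funext c
    have := congrFun hfe (Encodable.encode c)
    simp only [not_not, Denumerable.ofNat_encode] at this
    exact this


/-! ### Primitive recursive bookkeeping and higher block presentations -/

theorem primrecPred_const {α : Type*} [Primcodable α] (p : Prop) :
    PrimrecPred (fun _ : α => p) := by
  classical
  exact ⟨fun _ => Classical.dec p, Primrec.const _⟩

theorem primrecPred_imp {α : Type*} [Primcodable α] {p q : α → Prop}
    (hp : PrimrecPred p) (hq : PrimrecPred q) : PrimrecPred (fun a => p a → q a) :=
  (hp.not.or hq).of_eq (fun _ => imp_iff_not_or.symm)

theorem primrecPred_forall {α ι : Type*} [Primcodable α] [Finite ι] {p : ι → α → Prop}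
    (hp : ∀ i, PrimrecPred (p i)) : PrimrecPred (fun a => ∀ i, p i a) := by
  classical
  haveI := Fintype.ofFinite ι
  have h : ∀ F : Finset ι, PrimrecPred (fun a => ∀ i ∈ F, p i a) := by
    intro F
    induction F using Finset.induction_on with
    | empty => exact (primrecPred_const True).of_eq (fun a => by simp)
    | insert i F _ ih => exact ((hp i).and ih).of_eq (fun a => by simp)
  exact (h Finset.univ).of_eq (fun a => by simp)

theorem primrec_filter {α β : Type*} [Primcodable α] [Primcodable β] {f : α → List β}
    {R : α → β → Prop} [∀ a, DecidablePred (R a)] (hf : Primrec f) (hR : PrimrecRel R) :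
    Primrec (fun a => (f a).filter (fun b => decide (R a b))) := by
  classical
  have : Primrec (fun a => (f a).filterMap (fun b => if R a b then some b else none)) := by
    refine Primrec.listFilterMap hf ?_
    refine Primrec.ite (c := fun q : α × β => R q.1 q.2) hR ?_ (Primrec.const none)
    exact Primrec.option_some.comp Primrec.snd
  refine this.of_eq ?_
  intro a
  rw [← List.filterMap_eq_filter]
  congr 1
  funext b
  simp [Option.guard]

def words {α : Type*} (A : List α) : ℕ → List (List α)
  | 0 => [[]]
  | k + 1 => A.flatMap (fun a => (words A k).map (fun l => a :: l))

theorem mem_words {α : Type*} (A : List α) (k : ℕ) (l : List α) :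
    l ∈ words A k ↔ l.length = k ∧ ∀ x ∈ l, x ∈ A := by
  induction k generalizing l with
  | zero =>
    simp only [words, List.mem_singleton, List.length_eq_zero_iff]
    constructor
    · rintro rfl; simp
    · exact fun h => h.1
  | succ k ih =>
    simp only [words, List.mem_flatMap, List.mem_map, ih]
    constructor
    · rintro ⟨a, ha, l, ⟨h1, h2⟩, rfl⟩
      simp [h1, ha]
      exact h2
    · rintro ⟨h1, h2⟩
      cases l with
      | nil => simp at h1
      | cons a l =>
        simp at h1 h2
        exact ⟨a, h2.1, l, ⟨h1, h2.2⟩, rfl⟩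

theorem words_primrec {α : Type*} [Primcodable α] (k : ℕ) :
    Primrec (fun A : List α => words A k) := by
  induction k with
  | zero => exact Primrec.const _
  | succ k ih =>
    refine Primrec.list_flatMap Primrec.id ?_
    refine Primrec.list_map (ih.comp Primrec.fst) ?_
    exact (Primrec.list_cons.comp (Primrec.snd.comp Primrec.fst) Primrec.snd)

section Tame

variable {G : Type*} [Group G] {s : ℕ} (Sf : Fin s → G)

def TameSet (B : Set G) : Prop :=
  1 ∈ B ∧ ∀ w : G → G → List ℕ,
    (∀ g i b, b ∈ B → Sf i * b ∈ B → w g (Sf i * b) = w (g * Sf i) b) →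
    ∀ g, ∀ b ∈ B, w g b = w (g * b) 1

theorem tame_one : TameSet Sf {1} := by
  refine ⟨rfl, ?_⟩
  rintro w - g b rfl
  simp

theorem tame_union {B C : Set G} (hB : TameSet Sf B) (hC : TameSet Sf C) : TameSet Sf (B ∪ C) := by
  refine ⟨Or.inl hB.1, ?_⟩
  rintro w hw g b (hb | hb)
  · exact hB.2 w (fun g i b h1 h2 => hw g i b (Or.inl h1) (Or.inl h2)) g b hb
  · exact hC.2 w (fun g i b h1 h2 => hw g i b (Or.inr h1) (Or.inr h2)) g b hb

theorem tame_left {B : Set G} (hB : TameSet Sf B) (i : Fin s) :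
    TameSet Sf (B ∪ (fun b => Sf i * b) '' B) := by
  refine ⟨Or.inl hB.1, ?_⟩
  intro w hw
  have h1 := hB.2 w (fun g i b h1 h2 => hw g i b (Or.inl h1) (Or.inl h2))
  rintro g b (hb | ⟨c, hc, rfl⟩)
  · exact h1 g b hb
  · dsimp only
    rw [hw g i c (Or.inl hc) (Or.inr ⟨c, hc, rfl⟩), h1 _ _ hc, mul_assoc]

theorem tame_left_inv {B : Set G} (hB : TameSet Sf B) (i : Fin s) :
    TameSet Sf (B ∪ (fun b => (Sf i)⁻¹ * b) '' B) := by
  refine ⟨Or.inl hB.1, ?_⟩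
  intro w hw
  have h1 := hB.2 w (fun g i b h1 h2 => hw g i b (Or.inl h1) (Or.inl h2))
  rintro g b (hb | ⟨c, hc, rfl⟩)
  · exact h1 g b hb
  · have h2 := hw (g * (Sf i)⁻¹) i ((Sf i)⁻¹ * c) (Or.inr ⟨c, hc, rfl⟩)
      (by rw [mul_inv_cancel_left]; exact Or.inl hc)
    rw [mul_inv_cancel_left, inv_mul_cancel_right, h1 _ _ hc] at h2
    dsimp only
    rw [← h2, mul_assoc]

theorem tame_exists (hgen : Subgroup.closure (Set.range Sf) = ⊤) (F : Finset G) :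
    ∃ B : Set G, B.Finite ∧ TameSet Sf B ∧ ↑F ⊆ B := by
  classical
  have h1 : ∀ g : G, ∃ B : Set G, B.Finite ∧ TameSet Sf B ∧ g ∈ B := by
    intro g
    have hg : g ∈ Subgroup.closure (Set.range Sf) := by rw [hgen]; trivial
    induction hg using Subgroup.closure_induction_left with
    | one => exact ⟨{1}, Set.finite_singleton _, tame_one Sf, rfl⟩
    | mul_left x hx y hy ih =>
      obtain ⟨i, rfl⟩ := hx
      obtain ⟨B, hf, ht, hm⟩ := ih
      exact ⟨_, hf.union (hf.image _), tame_left Sf ht i, Or.inr ⟨y, hm, rfl⟩⟩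
    | inv_mul_cancel x hx y hy ih =>
      obtain ⟨i, rfl⟩ := hx
      obtain ⟨B, hf, ht, hm⟩ := ih
      exact ⟨_, hf.union (hf.image _), tame_left_inv Sf ht i, Or.inr ⟨y, hm, rfl⟩⟩
  induction F using Finset.induction_on with
  | empty => exact ⟨{1}, Set.finite_singleton _, tame_one Sf, by simp⟩
  | insert g F _ ih =>
    obtain ⟨B, hf, ht, hm⟩ := ih
    obtain ⟨C, hf2, ht2, hm2⟩ := h1 g
    refine ⟨B ∪ C, hf.union hf2, tame_union Sf ht ht2, ?_⟩
    intro x hx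
    rcases Finset.mem_insert.1 (Finset.mem_coe.1 hx) with rfl | hx
    · exact Or.inr hm2
    · exact Or.inl (hm hx)

/-- an enumerated tame window -/
structure TameEnum (k : ℕ) (e : Fin k → G) (j0 : Fin k) : Prop where
  one : e j0 = 1
  tame : ∀ w : G → Fin k → List ℕ,
    (∀ g i j j', Sf i * e j' = e j → w g j = w (g * Sf i) j') →
    ∀ g j, w g j = w (g * e j) j0

theorem tameEnum_exists (hgen : Subgroup.closure (Set.range Sf) = ⊤) (F : Finset G) :
    ∃ (k : ℕ) (e : Fin k → G) (j0 : Fin k), TameEnum Sf k e j0 ∧ Function.Injective e ∧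
      ∀ g ∈ F, ∃ j, e j = g := by
  classical
  obtain ⟨B, hf, ht, hm⟩ := tame_exists Sf hgen F
  haveI : Finite B := hf
  obtain ⟨k, ⟨q⟩⟩ := Finite.exists_equiv_fin B
  refine ⟨k, fun j => (q.symm j : G), q ⟨1, ht.1⟩, ⟨by simp, ?_⟩, ?_, ?_⟩
  · intro w hw g j
    have h := ht.2 (fun g b => if h : b ∈ B then w g (q ⟨b, h⟩) else []) ?_ g (q.symm j)
      (q.symm j).2
    · simpa [ht.1] using h
    · intro g i b h1 h2
      simp only [h1, h2, dif_pos]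
      apply hw
      simp
  · exact Subtype.val_injective.comp q.symm.injective
  · intro g hg
    exact ⟨q ⟨g, hm hg⟩, by simp⟩

/-- Higher block reduction. -/
theorem block_computable {k : ℕ} {e : Fin k → G} {j0 : Fin k} (ht : TameEnum Sf k e j0)
    (Λ : ℕ → ℕ) (hΛ : Primrec Λ) (κ : ℕ) (P : ℕ → List (List ℕ) → Prop) (hP : PrimrecRel P)
    (hdom : DominoDecidable Sf) :
    ComputablePred (fun n => ∃ x : G → List ℕ,
      (∀ g, (x g).length = κ ∧ ∀ v ∈ x g, v < Λ n) ∧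
      ∀ g, P n (List.ofFn (fun j => x (g * e j)))) := by
  classical
  let W : ℕ → List (List (List ℕ)) := fun n =>
    (words (words (List.range (Λ n)) κ) k).filter (fun w => decide (P n w))
  have hW : Primrec W :=
    primrec_filter ((words_primrec k).comp ((words_primrec κ).comp (Primrec.list_range.comp hΛ))) hP
  have hWm : ∀ n w, w ∈ W n ↔ (w.length = k ∧ ∀ d ∈ w, d.length = κ ∧ ∀ v ∈ d, v < Λ n) ∧ P n w := by
    intro n w
    simp [W, mem_words]
  let Tr : ℕ → List (ℕ × ℕ × ℕ) := fun m =>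
    (List.range m).flatMap (fun t => (List.range s).flatMap (fun i =>
      (List.range m).map (fun t' => (t, i, t'))))
  have hTr : Primrec Tr := by
    refine Primrec.list_flatMap Primrec.list_range ?_
    refine Primrec.list_flatMap (Primrec.const _) ?_
    refine Primrec.list_map (Primrec.list_range.comp (Primrec.fst.comp Primrec.fst)) ?_
    exact Primrec.pair (Primrec.snd.comp (Primrec.fst.comp Primrec.fst))
      (Primrec.pair (Primrec.snd.comp Primrec.fst) Primrec.snd)
  let C : ℕ → ℕ × ℕ × ℕ → Prop := fun n q => ∀ i0 : Fin s, q.2.1 = (i0 : ℕ) → ∀ j j' : Fin k,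
    Sf i0 * e j' = e j →
      ((W n).getD q.1 []).getD j [] = ((W n).getD q.2.2 []).getD j' []
  have hC : PrimrecRel C := by
    refine primrecPred_forall (fun i0 => ?_)
    refine primrecPred_imp (Primrec.eq.comp
      (Primrec.fst.comp (Primrec.snd.comp Primrec.snd)) (Primrec.const _)) ?_
    refine primrecPred_forall (fun j => primrecPred_forall (fun j' => ?_))
    refine primrecPred_imp (primrecPred_const _) ?_
    refine Primrec.eq.comp ?_ ?_
    · refine (Primrec.list_getD _).comp ((Primrec.list_getD _).comp (hW.comp Primrec.fst) ?_)
        (Primrec.const _)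
      exact Primrec.fst.comp Primrec.snd
    · refine (Primrec.list_getD _).comp ((Primrec.list_getD _).comp (hW.comp Primrec.fst) ?_)
        (Primrec.const _)
      exact Primrec.snd.comp (Primrec.snd.comp Primrec.snd)
  let Θ : ℕ → List (ℕ × ℕ × ℕ) := fun n => (Tr (W n).length).filter (fun q => decide (C n q))
  have hΘ : Primrec Θ := primrec_filter (hTr.comp (Primrec.list_length.comp hW)) hC
  have hΘm : ∀ n t i t', (t, i, t') ∈ Θ n ↔
      (t < (W n).length ∧ i < s ∧ t' < (W n).length) ∧ C n (t, i, t') := by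
    intro n t i t'
    simp [Θ, Tr]
  obtain ⟨f, hf, hfs⟩ := hdom
  refine ComputablePred.computable_iff.2 ⟨fun n => f ((W n).length, Θ n),
    hf.comp (Computable.pair (Primrec.list_length.comp hW).to_comp hΘ.to_comp), ?_⟩
  funext n
  refine propext (Iff.trans ?_ (hfs _).symm)
  constructor
  · rintro ⟨x, hx1, hx2⟩
    let w : G → List (List ℕ) := fun g => List.ofFn (fun j => x (g * e j))
    have hw : ∀ g, w g ∈ W n := by
      intro g
      rw [hWm]
      refine ⟨⟨by simp [w], ?_⟩, hx2 g⟩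
      intro d hd
      obtain ⟨j, rfl⟩ := (List.mem_ofFn' _ _).1 hd
      exact hx1 _
    have hlt : ∀ g, (W n).idxOf (w g) < (W n).length := fun g => List.idxOf_lt_length_iff.2 (hw g)
    have hget : ∀ g, (W n).getD ((W n).idxOf (w g)) [] = w g := by
      intro g
      rw [List.getD_eq_getElem _ _ (hlt g)]
      exact List.getElem_idxOf (hlt g)
    refine ⟨fun g => (W n).idxOf (w g), hlt, ?_⟩
    intro g i
    rw [hΘm]
    refine ⟨⟨hlt _, i.2, hlt _⟩, ?_⟩
    intro i0 hi j j' hj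
    have hi : i = i0 := Fin.ext hi
    subst hi
    dsimp only
    rw [hget, hget]
    simp only [w]
    rw [List.getD_eq_getElem _ _ (by simp), List.getD_eq_getElem _ _ (by simp)]
    simp [← hj, mul_assoc]
  · rintro ⟨a, ha1, ha2⟩
    dsimp only at ha1 ha2
    let w : G → List (List ℕ) := fun g => (W n).getD (a g) []
    have hw : ∀ g, w g ∈ W n := by
      intro g
      simp only [w]
      rw [List.getD_eq_getElem _ _ (ha1 g)]
      exact List.getElem_mem _
    have hw2 := fun g => (hWm n (w g)).1 (hw g)
    have ht2 := ht.tame (fun g j => (w g).getD j []) (by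
      intro g i j j' hj
      have := ((hΘm n _ _ _).1 (ha2 g i)).2 i rfl j j' hj
      exact this)
    have hofn : ∀ g, List.ofFn (fun j => (w (g * e j)).getD j0 []) = w g := by
      intro g
      apply List.ext_getElem
      · simp [(hw2 g).1.1]
      · intro j h1 h2
        have hj : j < k := by simpa using h1
        have := ht2 g ⟨j, hj⟩
        dsimp only at this
        rw [List.getElem_ofFn, ← this, List.getD_eq_getElem _ _ h2]
    refine ⟨fun g => (w g).getD j0 [], ?_, ?_⟩
    · intro g
      apply (hw2 g).1.2
      dsimp only
      rw [List.getD_eq_getElem _ _ (by rw [(hw2 g).1.1]; exact j0.2)]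
      exact List.getElem_mem _
    · intro g
      rw [hofn]
      exact (hw2 g).2

end Tame


/-! ### Rigidity of mod 3 orientations of the grid -/

theorem grid_adj (u v : ℤ × ℤ) : gridGraph.Adj u v ↔
    v = u + (1, 0) ∨ v = u + (-1, 0) ∨ v = u + (0, 1) ∨ v = u + (0, -1) := by
  obtain ⟨a, b⟩ := u
  obtain ⟨c, d⟩ := v
  simp only [gridGraph, SimpleGraph.fromRel_adj, Prod.mk_add_mk, Prod.mk.injEq, ne_eq]
  omega

abbrev E3 : Type := ZMod 3 × ZMod 3

def dv : Fin 4 → E3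
  | 0 => (1, 0)
  | 1 => (2, 0)
  | 2 => (0, 1)
  | 3 => (0, 2)

theorem dv_inj : Function.Injective dv := by decide

theorem dv_square : ∀ a b a' b' : Fin 4, dv a + dv b' = dv b + dv a' → a ≠ b →
    dv b' ≠ - dv a → dv a' ≠ - dv b → a' = a ∧ b' = b ∧ dv b ≠ - dv a := by decide

theorem dv_line : ∀ a a' b : Fin 4, a ≠ b → dv b ≠ - dv a → a' ≠ b → dv b ≠ - dv a' →
    dv a' ≠ - dv a → a' = a := by decide

theorem grid_rigid (ε : ℤ × ℤ → E3)
    (h1 : ∀ u v, gridGraph.Adj u v → ∃ i, ε v = ε u + dv i)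
    (h2 : ∀ u v v', gridGraph.Adj u v → gridGraph.Adj u v' → v ≠ v' → ε v ≠ ε v') :
    ∃ p q : ℤ × ℤ, ∀ u, (gridGraph.Adj u (u + p) ∧ ε (u + p) = ε u + dv 0) ∧
      (gridGraph.Adj u (u + q) ∧ ε (u + q) = ε u + dv 2) := by
  have aE : ∀ u : ℤ × ℤ, gridGraph.Adj u (u + (1, 0)) := fun u => by rw [grid_adj]; simp
  have aN : ∀ u : ℤ × ℤ, gridGraph.Adj u (u + (0, 1)) := fun u => by rw [grid_adj]; simp
  choose α hα using fun u => h1 u (u + (1, 0)) (aE u)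
  choose β hβ using fun u => h1 u (u + (0, 1)) (aN u)
  have ne_of (u : ℤ × ℤ) (p q : ℤ × ℤ) (hpq : p ≠ q) : u + p ≠ u + q := by simpa using hpq
  have key : ∀ u, α (u + (0, 1)) = α u ∧ β (u + (1, 0)) = β u ∧ dv (β u) ≠ - dv (α u) ∧ α u ≠ β u := by
    intro u
    have hne : α u ≠ β u := by
      intro h
      apply h2 u _ _ (aE u) (aN u) (ne_of u _ _ (by decide))
      rw [hα, hβ, h]
    have hsq : u + (1, 0) + (0, 1) = u + (0, 1) + (1, 0) := by abel
    have h3 := dv_square (α u) (β u) (α (u + (0, 1))) (β (u + (1, 0))) ?_ hne ?_ ?_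
    · exact ⟨h3.1, h3.2.1, h3.2.2, hne⟩
    · have e1 := hβ (u + (1, 0))
      have e2 := hα (u + (0, 1))
      rw [hsq, e2, hα, hβ, add_assoc, add_assoc] at e1
      exact (add_left_cancel e1).symm
    · intro h
      refine h2 (u + (1, 0)) u (u + (1, 0) + (0, 1)) (aE u).symm (aN _) ?_ ?_
      · rw [add_assoc]; simp
      · rw [hβ, hα, h]; simp
    · intro h
      refine h2 (u + (0, 1)) u (u + (0, 1) + (1, 0)) (aN u).symm (aE _) ?_ ?_
      · rw [add_assoc]; simp
      · rw [hα, hβ, h]; simp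
  have keyE : ∀ u, α (u + (1, 0)) = α u := by
    intro u
    obtain ⟨_, k2, k3, k4⟩ := key u
    obtain ⟨_, _, l3, l4⟩ := key (u + (1, 0))
    rw [k2] at l3 l4
    refine dv_line _ _ _ k4 k3 l4 l3 ?_
    intro h
    refine h2 (u + (1, 0)) u (u + (1, 0) + (1, 0)) (aE u).symm (aE _) ?_ ?_
    · rw [add_assoc]; simp
    · rw [hα, hα, h]; simp
  have keyN : ∀ u, β (u + (0, 1)) = β u := by
    intro u
    obtain ⟨k1, _, k3, k4⟩ := key u
    obtain ⟨_, _, l3, l4⟩ := key (u + (0, 1))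
    rw [k1] at l3 l4
    have neg : ∀ x y : E3, x ≠ -y → y ≠ -x := by
      intro x y h h'
      exact h (by rw [h', neg_neg])
    refine dv_line _ _ _ k4.symm (neg _ _ k3) l4.symm (neg _ _ l3) ?_
    intro h
    refine h2 (u + (0, 1)) u (u + (0, 1) + (0, 1)) (aN u).symm (aN _) ?_ ?_
    · rw [add_assoc]; simp
    · rw [hβ, hβ, h]; simp
  have const : ∀ f : ℤ × ℤ → Fin 4, (∀ u, f (u + (1, 0)) = f u) → (∀ u, f (u + (0, 1)) = f u) →
      ∀ u, f u = f 0 := by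
    intro f hE hN
    have hx : ∀ x y : ℤ, f (x, y) = f (0, y) := by
      intro x y
      induction x using Int.induction_on with
      | zero => rfl
      | succ i ih => rw [← ih, ← hE (i, y)]; simp
      | pred i ih => rw [← ih, ← hE (-i - 1, y)]; simp
    have hy : ∀ y : ℤ, f (0, y) = f (0, 0) := by
      intro y
      induction y using Int.induction_on with
      | zero => rfl
      | succ i ih => rw [← ih, ← hN (0, i)]; simp
      | pred i ih => rw [← ih, ← hN (0, -i - 1)]; simp
    rintro ⟨x, y⟩
    rw [hx, hy]; rfl
  have cα := const α keyE (fun u => (key u).1)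
  have cβ := const β (fun u => (key u).2.1) keyN
  obtain ⟨_, _, k3, k4⟩ := key 0
  have dE : ∀ u, ε (u + (1, 0)) = ε u + dv (α 0) := fun u => by rw [hα, cα]
  have dN : ∀ u, ε (u + (0, 1)) = ε u + dv (β 0) := fun u => by rw [hβ, cβ]
  have dW : ∀ u, ε (u + (-1, 0)) = ε u + - dv (α 0) := fun u => by
    have := dE (u + (-1, 0))
    rw [show u + (-1, 0) + (1, 0) = u by ext <;> simp] at this
    rw [this]; simp
  have dS : ∀ u, ε (u + (0, -1)) = ε u + - dv (β 0) := fun u => by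
    have := dN (u + (0, -1))
    rw [show u + (0, -1) + (0, 1) = u by ext <;> simp] at this
    rw [this]; simp
  have aW : ∀ u : ℤ × ℤ, gridGraph.Adj u (u + (-1, 0)) := fun u => by rw [grid_adj]; simp
  have aS : ∀ u : ℤ × ℤ, gridGraph.Adj u (u + (0, -1)) := fun u => by rw [grid_adj]; simp
  have fin4 : ∀ a b : Fin 4, a ≠ b → dv b ≠ - dv a →
      (((dv a = dv 0 ∨ - dv a = dv 0) ∧ (dv b = dv 2 ∨ - dv b = dv 2)) ∨
       ((dv b = dv 0 ∨ - dv b = dv 0) ∧ (dv a = dv 2 ∨ - dv a = dv 2))) := by decide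
  have pE : ∀ c : Fin 4, (dv (α 0) = dv c ∨ - dv (α 0) = dv c) →
      ∃ p : ℤ × ℤ, ∀ u, gridGraph.Adj u (u + p) ∧ ε (u + p) = ε u + dv c := by
    rintro c (h | h)
    · exact ⟨(1, 0), fun u => ⟨aE u, by rw [dE, h]⟩⟩
    · exact ⟨(-1, 0), fun u => ⟨aW u, by rw [dW, h]⟩⟩
  have pN : ∀ c : Fin 4, (dv (β 0) = dv c ∨ - dv (β 0) = dv c) →
      ∃ p : ℤ × ℤ, ∀ u, gridGraph.Adj u (u + p) ∧ ε (u + p) = ε u + dv c := by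
    rintro c (h | h)
    · exact ⟨(0, 1), fun u => ⟨aN u, by rw [dN, h]⟩⟩
    · exact ⟨(0, -1), fun u => ⟨aS u, by rw [dS, h]⟩⟩
  rcases fin4 (α 0) (β 0) k4 k3 with ⟨ha, hb⟩ | ⟨hb, ha⟩
  · obtain ⟨p, hp⟩ := pE 0 ha
    obtain ⟨q, hq⟩ := pN 2 hb
    exact ⟨p, q, fun u => ⟨hp u, hq u⟩⟩
  · obtain ⟨p, hp⟩ := pN 0 hb
    obtain ⟨q, hq⟩ := pE 2 ha
    exact ⟨p, q, fun u => ⟨hp u, hq u⟩⟩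


/-! ### The decoded graph: locality and compactness -/

section Sim

variable {G : Type*} [Group G] {s : ℕ} (Sf : Fin s → G) (mk uk : ℕ → ℕ)
  (conn : ℕ → Fin s → ℕ → ℤ → ℤ → Prop)

def Marked (a : G → ℕ) (p : G × ℤ) : Prop := 1 ≤ p.2 ∧ p.2 ≤ (mk (a p.1) : ℤ)

def NB (a : G → ℕ) (p q : G × ℤ) : Prop :=
  Marked mk a p ∧ Marked mk a q ∧
    (DecodedAdj Sf mk uk conn a p q ∨ DecodedAdj Sf mk uk conn a q p)

def tr (g : G) (p : G × ℤ) : G × ℤ := (g * p.1, p.2)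

def shift (g : G) (a : G → ℕ) : G → ℕ := fun h => a (g * h)

theorem hop_shift {g : G} {a : G → ℕ} {p q : G × ℤ} (h : Hop Sf mk uk conn (shift g a) p q) :
    Hop Sf mk uk conn a (tr g p) (tr g q) := by
  obtain ⟨⟨i, h1, h2⟩, h3, h4⟩ := h
  refine ⟨⟨i, ?_, h2⟩, h3, h4⟩
  simp [tr, h1, mul_assoc]

theorem tr_inj (g : G) : Function.Injective (tr g : G × ℤ → G × ℤ) := by
  rintro ⟨x, i⟩ ⟨y, j⟩ h
  simpa [tr] using h

theorem dadj_shift {g : G} {a : G → ℕ} {p q : G × ℤ}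
    (h : DecodedAdj Sf mk uk conn (shift g a) p q) :
    DecodedAdj Sf mk uk conn a (tr g p) (tr g q) := by
  obtain ⟨h1, h2, h3, z, h4, h5⟩ := h
  refine ⟨fun h => h1 (tr_inj g h), h2, h3, tr g z, ?_, hop_shift _ _ _ _ h5⟩
  exact h4.lift (tr g) (fun x y hxy => ⟨hop_shift _ _ _ _ hxy.1, hxy.2⟩)

theorem nb_shift' {g : G} {a : G → ℕ} {p q : G × ℤ} (h : NB Sf mk uk conn (shift g a) p q) :
    NB Sf mk uk conn a (tr g p) (tr g q) :=
  ⟨h.1, h.2.1, h.2.2.imp (dadj_shift _ _ _ _) (dadj_shift _ _ _ _)⟩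

theorem nb_shift {g : G} {a : G → ℕ} {p q : G × ℤ} : NB Sf mk uk conn (shift g a) p q ↔
    NB Sf mk uk conn a (tr g p) (tr g q) := by
  refine ⟨nb_shift' _ _ _ _, fun h => ?_⟩
  have e : a = shift g⁻¹ (shift g a) := by funext x; simp [shift]
  rw [e] at h
  have h2 := nb_shift' _ _ _ _ h
  have e2 : ∀ p : G × ℤ, tr g⁻¹ (tr g p) = p := fun p => by simp [tr]
  rwa [e2, e2] at h2

theorem sol_shift {m : ℕ} {Θ : List (ℕ × ℕ × ℕ)} {a : G → ℕ} (h : IsSolution Sf m Θ a) (g : G) :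
    IsSolution Sf m Θ (shift g a) := by
  refine ⟨fun x => h.1 _, fun x i => ?_⟩
  have := h.2 (g * x) i
  rwa [mul_assoc] at this

open Filter Topology

theorem ev_eq (a : G → ℕ) (g : G) : ∀ᶠ b in 𝓝 a, b g = a g := by
  have h : ∀ᶠ n in 𝓝 (a g), n = a g := by simp [nhds_discrete]
  exact ((continuous_apply g).tendsto a).eventually h

theorem ev_hop {a : G → ℕ} {p q : G × ℤ} (h : Hop Sf mk uk conn a p q) :
    ∀ᶠ b in 𝓝 a, Hop Sf mk uk conn b p q := by
  filter_upwards [ev_eq a p.1, ev_eq a q.1] with b h1 h2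
  unfold Hop SlotOK
  rw [h1, h2]
  exact h

theorem ev_dadj {a : G → ℕ} {p q : G × ℤ} (h : DecodedAdj Sf mk uk conn a p q) :
    ∀ᶠ b in 𝓝 a, DecodedAdj Sf mk uk conn b p q := by
  obtain ⟨h1, h2, h3, z, h4, h5⟩ := h
  have h6 : ∀ᶠ b in 𝓝 a, Relation.ReflTransGen
      (fun p q => Hop Sf mk uk conn b p q ∧ q.2 ≤ 0) p z := by
    clear h5
    induction h4 with
    | refl => exact Eventually.of_forall (fun b => Relation.ReflTransGen.refl)
    | tail _ h ih =>
      filter_upwards [ih, ev_hop _ _ _ _ h.1] with b hb1 hb2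
      exact hb1.tail ⟨hb2, h.2⟩
  filter_upwards [h6, ev_hop _ _ _ _ h5] with b hb1 hb2
  exact ⟨h1, h2, h3, z, hb1, hb2⟩

theorem ev_nb {a : G → ℕ} {p q : G × ℤ} (h : NB Sf mk uk conn a p q) :
    ∀ᶠ b in 𝓝 a, NB Sf mk uk conn b p q := by
  obtain ⟨h1, h2, h3⟩ := h
  have h4 : ∀ᶠ b in 𝓝 a, (DecodedAdj Sf mk uk conn b p q ∨ DecodedAdj Sf mk uk conn b q p) := by
    rcases h3 with h | h
    · exact (ev_dadj _ _ _ _ h).mono (fun b hb => Or.inl hb)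
    · exact (ev_dadj _ _ _ _ h).mono (fun b hb => Or.inr hb)
  filter_upwards [ev_eq a p.1, ev_eq a q.1, h4] with b hb1 hb2 hb3
  refine ⟨?_, ?_, hb3⟩
  · unfold Marked; rw [hb1]; exact h1
  · unfold Marked; rw [hb2]; exact h2

/-- the grid inside a configuration -/
structure GridIn (a : G → ℕ) (φ : ℤ × ℤ → G × ℤ) : Prop where
  inj : Function.Injective φ
  marked : ∀ u, Marked mk a (φ u)
  surj : ∀ p, Marked mk a p → ∃ u, φ u = p
  adj : ∀ u v, NB Sf mk uk conn a (φ u) (φ v) ↔ gridGraph.Adj u v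

theorem gridIn_exists {a : G → ℕ} (h : Nonempty (gridGraph ≃g DecodedGraph Sf mk uk conn a)) :
    ∃ φ, GridIn Sf mk uk conn a φ := by
  obtain ⟨f⟩ := h
  refine ⟨fun u => (f u).1, ?_, fun u => (f u).2, ?_, ?_⟩
  · exact Subtype.val_injective.comp f.injective
  · intro p hp
    exact ⟨f.symm ⟨p, hp⟩, by simp⟩
  · intro u v
    rw [← f.map_adj_iff]
    unfold DecodedGraph
    rw [SimpleGraph.fromRel_adj]
    constructor
    · rintro ⟨-, -, h | h⟩
      · exact ⟨fun e => h.1 (congrArg Subtype.val e), Or.inl h⟩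
      · exact ⟨fun e => h.1 (congrArg Subtype.val e).symm, Or.inr h⟩
    · rintro ⟨-, h⟩
      exact ⟨(f u).2, (f v).2, h⟩

theorem grid_nbrs (u : ℤ × ℤ) : {v | gridGraph.Adj u v} =
    ((({(1, 0), (-1, 0), (0, 1), (0, -1)} : Finset (ℤ × ℤ)).image (fun d => u + d) :
      Finset (ℤ × ℤ)) : Set (ℤ × ℤ)) := by
  ext v
  rw [Set.mem_ofPred_eq, grid_adj]
  simp

theorem nb_card {a : G → ℕ} {φ : ℤ × ℤ → G × ℤ} (h : GridIn Sf mk uk conn a φ) {p : G × ℤ}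
    (hp : Marked mk a p) : {q | NB Sf mk uk conn a p q}.Finite ∧
      {q | NB Sf mk uk conn a p q}.ncard = 4 := by
  obtain ⟨u, rfl⟩ := h.surj p hp
  have e : {q | NB Sf mk uk conn a (φ u) q} = φ '' {v | gridGraph.Adj u v} := by
    ext q
    constructor
    · intro hq
      obtain ⟨v, rfl⟩ := h.surj q hq.2.1
      exact ⟨v, (h.adj u v).1 hq, rfl⟩
    · rintro ⟨v, hv, rfl⟩
      exact (h.adj u v).2 hv
  rw [e, Set.ncard_image_of_injective _ h.inj, grid_nbrs]
  refine ⟨(Finset.finite_toSet _).image _, ?_⟩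
  rw [Set.ncard_coe_finset, Finset.card_image_of_injective _ (add_right_injective u)]
  rfl

variable (m : ℕ) (Θ : List (ℕ × ℕ × ℕ))

theorem nb_stable
    (hall : ∀ a : G → ℕ, IsSolution Sf m Θ a → ∃ φ, GridIn Sf mk uk conn a φ)
    {a : G → ℕ} (ha : IsSolution Sf m Θ a) (p : G × ℤ) :
    ∀ᶠ b in 𝓝 a, IsSolution Sf m Θ b → ∀ q, NB Sf mk uk conn b p q ↔ NB Sf mk uk conn a p q := by
  by_cases hp : Marked mk a p
  · obtain ⟨φ, hφ⟩ := hall a ha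
    obtain ⟨hfin, hc⟩ := nb_card _ _ _ _ hφ hp
    have h1 : ∀ᶠ b in 𝓝 a, ∀ q ∈ {q | NB Sf mk uk conn a p q}, NB Sf mk uk conn b p q :=
      (Filter.eventually_all_finite hfin).2 (fun q hq => ev_nb _ _ _ _ hq)
    filter_upwards [h1, ev_eq a p.1] with b hb hb1 hsol q
    refine ⟨fun hq => ?_, fun hq => hb q hq⟩
    obtain ⟨φ', hφ'⟩ := hall b hsol
    have hp' : Marked mk b p := by unfold Marked; rw [hb1]; exact hp
    obtain ⟨hfin', hc'⟩ := nb_card _ _ _ _ hφ' hp'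
    have := Set.eq_of_subset_of_ncard_le (s := {q | NB Sf mk uk conn a p q})
      (t := {q | NB Sf mk uk conn b p q}) hb (by rw [hc, hc']) hfin'
    exact (Set.ext_iff.1 this q).2 hq
  · filter_upwards [ev_eq a p.1] with b hb1 hsol q
    refine ⟨fun hq => absurd ?_ hp, fun hq => absurd hq.1 hp⟩
    have := hq.1
    unfold Marked at this
    rwa [hb1] at this

theorem nhds_finite {a : G → ℕ} {U : Set (G → ℕ)} (hU : U ∈ 𝓝 a) :
    ∃ F : Finset G, ∀ b : G → ℕ, (∀ g ∈ F, b g = a g) → b ∈ U := by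
  rw [nhds_pi, Filter.mem_pi] at hU
  obtain ⟨I, hI, t, ht, hs⟩ := hU
  refine ⟨hI.toFinset, fun b hb => hs ?_⟩
  intro g hg
  rw [hb g (by simpa using hg)]
  exact mem_of_mem_nhds (ht g)

theorem sol_compact : IsCompact {a : G → ℕ | IsSolution Sf m Θ a} := by
  have h1 : IsCompact (Set.pi Set.univ (fun _ : G => Set.Iio m)) :=
    isCompact_univ_pi (fun _ => (Set.finite_Iio m).isCompact)
  have h2 : IsClosed {a : G → ℕ | ∀ (g : G) (i : Fin s), (a g, (i : ℕ), a (g * Sf i)) ∈ Θ} := by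
    simp only [Set.ofPred_forall]
    refine isClosed_iInter (fun g => isClosed_iInter (fun i => ?_))
    have hc : Continuous (fun a : G → ℕ => (a g, a (g * Sf i))) := by fun_prop
    exact (isClosed_discrete {q : ℕ × ℕ | (q.1, (i : ℕ), q.2) ∈ Θ}).preimage hc
  convert h1.inter_right h2 using 1
  ext a
  simp [IsSolution, Set.mem_pi]

theorem nb_local
    (hall : ∀ a : G → ℕ, IsSolution Sf m Θ a → ∃ φ, GridIn Sf mk uk conn a φ) :
    ∃ F : Finset G,
      (∀ a b : G → ℕ, IsSolution Sf m Θ a → IsSolution Sf m Θ b → (∀ g ∈ F, a g = b g) →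
        ∀ i q, NB Sf mk uk conn a (1, i) q → NB Sf mk uk conn b (1, i) q) ∧
      ∀ a, IsSolution Sf m Θ a → ∀ i q, NB Sf mk uk conn a (1, i) q → q.1 ∈ F := by
  classical
  have h1 : ∀ a : G → ℕ, ∃ F : Finset G, IsSolution Sf m Θ a →
      (∀ b, (∀ g ∈ F, b g = a g) → IsSolution Sf m Θ b → ∀ i q,
        (NB Sf mk uk conn b (1, i) q ↔ NB Sf mk uk conn a (1, i) q)) ∧
      ∀ i q, NB Sf mk uk conn a (1, i) q → q.1 ∈ F := by
    intro a
    by_cases ha : IsSolution Sf m Θ a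
    swap
    · exact ⟨∅, fun h => absurd h ha⟩
    have e1 : ∀ᶠ b in 𝓝 a, ∀ i ∈ Finset.Icc (1 : ℤ) (mk (a 1)), IsSolution Sf m Θ b → ∀ q,
        NB Sf mk uk conn b (1, i) q ↔ NB Sf mk uk conn a (1, i) q :=
      (Filter.eventually_all_finset _).2 (fun i _ => nb_stable Sf mk uk conn m Θ hall ha (1, i))
    obtain ⟨F1, hF1⟩ := nhds_finite (e1.and (ev_eq a 1))
    obtain ⟨φ, hφ⟩ := hall a ha
    have hfin : (⋃ i ∈ Set.Icc (1 : ℤ) (mk (a 1)), {q | NB Sf mk uk conn a (1, i) q}).Finite := by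
      refine (Set.finite_Icc _ _).biUnion (fun i hi => (nb_card _ _ _ _ hφ ?_).1)
      exact hi
    refine ⟨F1 ∪ hfin.toFinset.image Prod.fst, fun _ => ⟨?_, ?_⟩⟩
    · intro b hb hsol i q
      obtain ⟨h2, h3⟩ := hF1 b (fun g hg => hb g (Finset.mem_union_left _ hg))
      by_cases hi : i ∈ Finset.Icc (1 : ℤ) (mk (a 1))
      · exact h2 i hi hsol q
      · refine ⟨fun hq => absurd hq.1 ?_, fun hq => absurd hq.1 ?_⟩
        · unfold Marked; dsimp only; rw [h3]; simpa using hi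
        · unfold Marked; simpa using hi
    · intro i q hq
      refine Finset.mem_union_right _ (Finset.mem_image.2 ⟨q, ?_, rfl⟩)
      rw [Set.Finite.mem_toFinset]
      exact Set.mem_biUnion (show i ∈ Set.Icc (1 : ℤ) (mk (a 1)) from hq.1) hq
  choose Fa hFa using h1
  obtain ⟨t, ht1, ht2⟩ := (sol_compact Sf m Θ).elim_nhds_subcover
    (fun a => {b | ∀ g ∈ Fa a, b g = a g}) (fun a _ =>
      (Filter.eventually_all_finset (Fa a)).2 (fun g _ => ev_eq a g))
  refine ⟨t.biUnion Fa, ?_, ?_⟩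
  · intro a b ha hb hab i q hq
    obtain ⟨c, hc, hac⟩ := Set.mem_iUnion₂.1 (ht2 ha)
    have h3 := (hFa c (ht1 c hc)).1
    have h4 := (h3 a hac ha i q).1 hq
    refine (h3 b (fun g hg => ?_) hb i q).2 h4
    rw [← hab g (Finset.mem_biUnion.2 ⟨c, hc, hg⟩)]
    exact hac g hg
  · intro a ha i q hq
    obtain ⟨c, hc, hac⟩ := Set.mem_iUnion₂.1 (ht2 ha)
    have h3 := hFa c (ht1 c hc)
    exact Finset.mem_biUnion.2 ⟨c, hc, h3.2 i q ((h3.1 a hac ha i q).1 hq)⟩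

end Sim


/-! ### The reduction -/

section Reduction

variable {G : Type*} [Group G] {s : ℕ} (Sf : Fin s → G) (mk uk : ℕ → ℕ)
  (conn : ℕ → Fin s → ℕ → ℤ → ℤ → Prop) (m : ℕ) (Θ : List (ℕ × ℕ × ℕ))
  {k : ℕ} (e : Fin k → G) (j0 : Fin k) (js : Fin s → Fin k) (K : ℕ)
  (S : CSys) {ζ : ℕ} (enc : S.Z × E3 → Fin ζ)

def Nbr (α : Fin k → Fin m) (i : Fin K) (j : Fin k) (i' : Fin K) : Prop :=
  ∃ a : G → ℕ, IsSolution Sf m Θ a ∧ (∀ j, a (e j) = α j) ∧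
    NB Sf mk uk conn a (1, ((i : ℕ) : ℤ) + 1) (e j, ((i' : ℕ) : ℤ) + 1)

def EdgeOK (y y' : S.Z × E3) : Prop :=
  (∃ t, y'.2 = y.2 + dv t) ∧ (y'.2 = y.2 + dv 0 → S.H y.1 y'.1) ∧
    (y'.2 = y.2 + dv 2 → S.V y.1 y'.1)

def PS (l : List ℕ) (c : Fin k → ℕ) (zd ct : Fin k → ℕ → ℕ) : Prop :=
  (∀ j, c j < m) ∧ (∀ i : Fin s, (c j0, (i : ℕ), c (js i)) ∈ Θ) ∧
  ∀ α : Fin k → Fin m, (∀ j, c j = α j) →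
    (∀ i : Fin K, (i : ℕ) < mk (α j0) → ∃ y, zd j0 i = enc y ∧ ct j0 i ≤ l.length ∧
      ((S.inp y.1).isSome = true → l.getD (ct j0 i) 0 = (S.inp y.1).getD 0)) ∧
    (∀ (i : Fin K) (j : Fin k) (i' : Fin K), Nbr Sf mk uk conn m Θ e K α i j i' →
      ∃ y y', zd j0 i = enc y ∧ zd j i' = enc y' ∧ EdgeOK S y y' ∧
        (y'.2 = y.2 + dv 0 → opRule l.length (S.op y'.1) (ct j0 i) (ct j i'))) ∧
    (∀ (i : Fin K) (j : Fin k) (i' : Fin K) (j2 : Fin k) (i2 : Fin K),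
      Nbr Sf mk uk conn m Θ e K α i j i' → Nbr Sf mk uk conn m Θ e K α i j2 i2 →
      (e j, i') ≠ (e j2, i2) → ∀ y y2, zd j i' = enc y → zd j2 i2 = enc y2 → y.2 ≠ y2.2)

variable {Sf mk uk conn m Θ e j0 js K S enc}

theorem ps_of_tiles (hone : e j0 = 1) (hjs : ∀ i, e (js i) = Sf i)
    (henc : Function.Injective enc)
    (F : Finset G) (hF : ∀ g ∈ F, ∃ j, e j = g)
    (hloc : ∀ a b : G → ℕ, IsSolution Sf m Θ a → IsSolution Sf m Θ b → (∀ g ∈ F, a g = b g) →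
        ∀ i q, NB Sf mk uk conn a (1, i) q → NB Sf mk uk conn b (1, i) q)
    {a : G → ℕ} (ha : IsSolution Sf m Θ a) {φ : ℤ × ℤ → G × ℤ} (hφ : GridIn Sf mk uk conn a φ)
    {l : List ℕ} (hT : S.Tiles l) :
    ∃ (c : G → ℕ) (zd ct : G → ℕ → ℕ), (∀ g, c g < m) ∧ (∀ g i, zd g i ≤ ζ) ∧
      (∀ g i, ct g i ≤ l.length) ∧
      ∀ g, PS Sf mk uk conn m Θ e j0 js K S enc l (fun j => c (g * e j))
        (fun j => zd (g * e j)) (fun j => ct (g * e j)) := by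
  classical
  obtain ⟨z, r, hz⟩ := hT
  choose ψ hψ using hφ.surj
  -- labels on the grid
  let Y : ℤ × ℤ → S.Z × E3 := fun u => (z u.1 u.2, ((u.1 : ZMod 3), (u.2 : ZMod 3)))
  let R : ℤ × ℤ → ℕ := fun u => r u.1 u.2
  let zd : G → ℕ → ℕ := fun g i => if h : Marked mk a (g, (i : ℤ) + 1) then enc (Y (ψ _ h)) else 0
  let ct : G → ℕ → ℕ := fun g i => if h : Marked mk a (g, (i : ℤ) + 1) then R (ψ _ h) else 0
  have hzd : ∀ g (i : ℕ) u, φ u = (g, (i : ℤ) + 1) → zd g i = enc (Y u) := by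
    intro g i u hu
    have h : Marked mk a (g, (i : ℤ) + 1) := hu ▸ hφ.marked u
    simp only [zd, dif_pos h]
    rw [hφ.inj ((hψ _ h).trans hu.symm)]
  have hct : ∀ g (i : ℕ) u, φ u = (g, (i : ℤ) + 1) → ct g i = R u := by
    intro g i u hu
    have h : Marked mk a (g, (i : ℤ) + 1) := hu ▸ hφ.marked u
    simp only [ct, dif_pos h]
    rw [hφ.inj ((hψ _ h).trans hu.symm)]
  have hY : ∀ u v, gridGraph.Adj u v → ∃ t, (Y v).2 = (Y u).2 + dv t ∧
      (t = 0 → v = u + (1, 0)) ∧ (t = 2 → v = u + (0, 1)) ∧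
      (∀ v', gridGraph.Adj u v' → (Y v').2 = (Y u).2 + dv t → v' = v) := by
    have dirs : ∀ u v, gridGraph.Adj u v → ∃ t : Fin 4, (Y v).2 = (Y u).2 + dv t ∧
        v = u + (match t with | 0 => (1, 0) | 1 => (-1, 0) | 2 => (0, 1) | 3 => (0, -1)) := by
      rintro u v h
      have h21 : (-1 : ZMod 3) = 2 := by decide
      rw [grid_adj] at h
      rcases h with h | h | h | h
      · exact ⟨0, by subst h; simp [Y, dv], h⟩
      · exact ⟨1, by subst h; simp [Y, dv, h21], h⟩
      · exact ⟨2, by subst h; simp [Y, dv], h⟩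
      · exact ⟨3, by subst h; simp [Y, dv, h21], h⟩
    intro u v h
    obtain ⟨t, h1, h2⟩ := dirs u v h
    refine ⟨t, h1, ?_, ?_, ?_⟩
    · rintro rfl; exact h2
    · rintro rfl; exact h2
    · intro v' h' h3
      obtain ⟨t', h4, h5⟩ := dirs u v' h'
      have : t' = t := dv_inj (add_left_cancel (h4.symm.trans h3))
      subst this
      rw [h2, h5]
  refine ⟨a, zd, ct, ha.1, ?_, ?_, ?_⟩
  · intro g i
    simp only [zd]
    split_ifs
    · exact (enc _).2.le
    · exact Nat.zero_le _
  · intro g i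
    simp only [ct]
    split_ifs
    · exact hz.le _ _
    · exact Nat.zero_le _
  intro g
  refine ⟨fun j => ha.1 _, ?_, ?_⟩
  · intro i
    have := ha.2 g i
    simpa [hone, hjs] using this
  intro α hα
  have hnb : ∀ i j i', Nbr Sf mk uk conn m Θ e K α i j i' → ∃ u v, gridGraph.Adj u v ∧
      φ u = (g * e j0, ((i : ℕ) : ℤ) + 1) ∧ φ v = (g * e j, ((i' : ℕ) : ℤ) + 1) := by
    rintro i j i' ⟨b, hb, hbα, hnb⟩
    have h1 : NB Sf mk uk conn (shift g a) (1, ((i : ℕ) : ℤ) + 1) (e j, ((i' : ℕ) : ℤ) + 1) := by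
      refine hloc b _ hb (sol_shift _ ha g) ?_ _ _ hnb
      intro x hx
      obtain ⟨j', rfl⟩ := hF x hx
      rw [hbα, ← hα]
      rfl
    rw [nb_shift] at h1
    obtain ⟨u, hu⟩ := hφ.surj _ h1.1
    obtain ⟨v, hv⟩ := hφ.surj _ h1.2.1
    rw [← hu, ← hv, hφ.adj] at h1
    refine ⟨u, v, h1, ?_, ?_⟩
    · rw [hu, hone]; rfl
    · rw [hv]; rfl
  refine ⟨?_, ?_, ?_⟩
  · intro i hi
    have hm : Marked mk a (g * e j0, ((i : ℕ) : ℤ) + 1) := by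
      have := hα j0
      dsimp only at this
      unfold Marked
      dsimp only
      rw [this]
      omega
    obtain ⟨u, hu⟩ := hφ.surj _ hm
    refine ⟨Y u, by beta_reduce; rw [hzd _ _ _ hu], ?_, ?_⟩
    · beta_reduce; rw [hct _ _ _ hu]; exact hz.le _ _
    · beta_reduce
      rw [hct _ _ _ hu]
      intro hs
      obtain ⟨σ, hσ⟩ := Option.isSome_iff_exists.1 hs
      rw [hσ]
      exact hz.inp _ _ σ hσ
  · intro i j i' h
    obtain ⟨u, v, huv, hu, hv⟩ := hnb i j i' h
    obtain ⟨t, ht1, ht2, ht3, -⟩ := hY u v huv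
    have c0 : (Y v).2 = (Y u).2 + dv 0 → v = u + (1, 0) := fun h =>
      ht2 (dv_inj (add_left_cancel (ht1.symm.trans h)))
    have c2 : (Y v).2 = (Y u).2 + dv 2 → v = u + (0, 1) := fun h =>
      ht3 (dv_inj (add_left_cancel (ht1.symm.trans h)))
    refine ⟨Y u, Y v, by beta_reduce; rw [hzd _ _ _ hu], by beta_reduce; rw [hzd _ _ _ hv], ⟨⟨t, ht1⟩, ?_, ?_⟩, ?_⟩
    · intro h
      have := c0 h
      subst this
      simpa [Y] using hz.hor u.1 u.2
    · intro h
      have := c2 h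
      subst this
      simpa [Y] using hz.ver u.1 u.2
    · intro h
      have := c0 h
      subst this
      beta_reduce
      rw [hct _ _ _ hu, hct _ _ _ hv]
      simpa [Y, R] using hz.opr u.1 u.2
  · intro i j i' j2 i2 h h' hne y y2 hy hy2 hyy
    obtain ⟨u, v, huv, hu, hv⟩ := hnb i j i' h
    obtain ⟨u', v', huv', hu', hv'⟩ := hnb i j2 i2 h'
    have : u' = u := hφ.inj (hu'.trans hu.symm)
    subst this
    beta_reduce at hy hy2
    rw [hzd _ _ _ hv] at hy
    rw [hzd _ _ _ hv'] at hy2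
    have e1 := henc (Fin.ext hy)
    have e2 := henc (Fin.ext hy2)
    obtain ⟨t, ht1, -, -, ht4⟩ := hY _ v huv
    have : v' = v := ht4 v' huv' (by rw [← ht1, e1, e2, hyy])
    subst this
    apply hne
    have h3 := hv.symm.trans hv'
    simp only [Prod.mk.injEq, mul_right_inj, add_left_inj, Nat.cast_inj] at h3
    exact Prod.ext h3.1 (Fin.ext h3.2)

theorem tiles_of_ps (hone : e j0 = 1) (hjs : ∀ i, e (js i) = Sf i)
    (henc : Function.Injective enc)
    (hK : ∀ c < m, mk c ≤ K) (F : Finset G) (hF : ∀ g ∈ F, ∃ j, e j = g)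
    (hin : ∀ a, IsSolution Sf m Θ a → ∀ i q, NB Sf mk uk conn a (1, i) q → q.1 ∈ F)
    (hall : ∀ a : G → ℕ, IsSolution Sf m Θ a → ∃ φ, GridIn Sf mk uk conn a φ)
    {l : List ℕ} (c : G → ℕ) (zd ct : G → ℕ → ℕ)
    (hps : ∀ g, PS Sf mk uk conn m Θ e j0 js K S enc l (fun j => c (g * e j))
        (fun j => zd (g * e j)) (fun j => ct (g * e j))) : S.Tiles l := by
  classical
  have hsol : IsSolution Sf m Θ c := by
    refine ⟨fun g => ?_, fun g i => ?_⟩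
    · simpa [hone] using (hps g).1 j0
    · simpa [hone, hjs] using (hps g).2.1 i
  obtain ⟨φ, hφ⟩ := hall c hsol
  let α : G → Fin k → Fin m := fun g j => ⟨c (g * e j), hsol.1 _⟩
  have hα0 : ∀ g, ((α g j0 : Fin m) : ℕ) = c g := fun g => by simp [α, hone]
  -- coordinates of grid points
  have hco : ∀ u, ∃ i : Fin K, φ u = ((φ u).1, ((i : ℕ) : ℤ) + 1) ∧ (i : ℕ) < mk (c (φ u).1) := by
    intro u
    obtain ⟨h1, h2⟩ := hφ.marked u
    have h3 := hK _ (hsol.1 (φ u).1)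
    refine ⟨⟨((φ u).2 - 1).toNat, by omega⟩, ?_, ?_⟩
    · refine Prod.ext rfl ?_
      dsimp only
      omega
    · dsimp only
      omega
  choose I hI1 hI2 using hco
  have hun : ∀ u, ∃ y, zd (φ u).1 (I u) = enc y ∧ ct (φ u).1 (I u) ≤ l.length ∧
      ((S.inp y.1).isSome = true → l.getD (ct (φ u).1 (I u)) 0 = (S.inp y.1).getD 0) := by
    intro u
    have := ((hps (φ u).1).2.2 (α (φ u).1) (fun j => rfl)).1 (I u) (by rw [hα0]; exact hI2 u)
    simpa only [hone, mul_one] using this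
  choose Y hY1 hY2 hY3 using hun
  have hnbr : ∀ u v, gridGraph.Adj u v → ∃ j, (φ v).1 = (φ u).1 * e j ∧
      Nbr Sf mk uk conn m Θ e K (α (φ u).1) (I u) j (I v) := by
    intro u v huv
    have h1 := (hφ.adj u v).2 huv
    have h2 : NB Sf mk uk conn (shift (φ u).1 c) (1, (φ u).2) ((φ u).1⁻¹ * (φ v).1, (φ v).2) := by
      rw [nb_shift]
      simpa [tr] using h1
    obtain ⟨j, hj⟩ := hF _ (hin _ (sol_shift _ hsol _) _ _ h2)
    dsimp only at hj
    refine ⟨j, by rw [hj]; simp, shift (φ u).1 c, sol_shift _ hsol _, fun j => rfl, ?_⟩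
    have e1 := congrArg Prod.snd (hI1 u)
    have e2 := congrArg Prod.snd (hI1 v)
    dsimp only at e1 e2
    rw [← e1, ← e2, hj]
    exact h2
  have hedge : ∀ u v, gridGraph.Adj u v → EdgeOK S (Y u) (Y v) ∧
      ((Y v).2 = (Y u).2 + dv 0 →
        opRule l.length (S.op (Y v).1) (ct (φ u).1 (I u)) (ct (φ v).1 (I v))) := by
    intro u v huv
    obtain ⟨j, hj, hn⟩ := hnbr u v huv
    obtain ⟨y, y', h1, h2, h3, h4⟩ :=
      ((hps (φ u).1).2.2 (α (φ u).1) (fun j => rfl)).2.1 (I u) j (I v) hn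
    simp only [hone, mul_one, ← hj] at h1 h2 h4
    have e1 : y = Y u := henc (Fin.ext (h1.symm.trans (hY1 u)))
    have e2 : y' = Y v := henc (Fin.ext (h2.symm.trans (hY1 v)))
    subst e1
    subst e2
    exact ⟨h3, h4⟩
  obtain ⟨p, q, hpq⟩ := grid_rigid (fun u => (Y u).2) (fun u v huv => (hedge u v huv).1.1) (by
    intro u v v' huv huv' hne
    obtain ⟨j, hj, hn⟩ := hnbr u v huv
    obtain ⟨j', hj', hn'⟩ := hnbr u v' huv'
    refine ((hps (φ u).1).2.2 (α (φ u).1) (fun j => rfl)).2.2 (I u) j (I v) j' (I v') hn hn' ?_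
      (Y v) (Y v') ?_ ?_
    · intro h
      apply hne
      apply hφ.inj
      obtain ⟨h1, h2⟩ := Prod.mk.inj h
      rw [hI1 v, hI1 v', hj, hj', h1, h2]
    · dsimp only
      rw [← hj]; exact hY1 v
    · dsimp only
      rw [← hj']; exact hY1 v')
  have ex : ∀ x y : ℤ, (x + 1) • p + y • q = (x • p + y • q) + p := fun x y => by
    rw [add_smul, one_smul]; abel
  have ey : ∀ x y : ℤ, x • p + (y + 1) • q = (x • p + y • q) + q := fun x y => by
    rw [add_smul, one_smul]; abel
  refine ⟨fun x y => (Y (x • p + y • q)).1,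
    fun x y => ct (φ (x • p + y • q)).1 (I (x • p + y • q)), ?_, ?_, ?_, ?_, ?_⟩
  · intro x y
    exact hY2 _
  · intro x y
    rw [ex]
    exact (hedge _ _ (hpq _).1.1).1.2.1 (hpq _).1.2
  · intro x y
    rw [ey]
    exact (hedge _ _ (hpq _).2.1).1.2.2 (hpq _).2.2
  · intro x y
    rw [ex]
    exact (hedge _ _ (hpq _).1.1).2 (hpq _).1.2
  · intro x y σ hσ
    have := hY3 (x • p + y • q) (by rw [hσ]; rfl)
    rw [hσ] at this
    exact this

end Reduction


theorem primrecPred_exists {α ι : Type*} [Primcodable α] [Finite ι] {p : ι → α → Prop}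
    (hp : ∀ i, PrimrecPred (p i)) : PrimrecPred (fun a => ∃ i, p i a) :=
  (primrecPred_forall (fun i => (hp i).not)).not.of_eq (fun a => by simp)

theorem primrecPred_mem {α β : Type*} [Primcodable α] [Primcodable β] {f : α → β}
    (hf : Primrec f) (L : List β) : PrimrecPred (fun a => f a ∈ L) := by
  classical
  induction L with
  | nil => exact (primrecPred_const False).of_eq (fun a => by simp)
  | cons b L ih =>
    exact ((Primrec.eq.comp hf (Primrec.const b)).or ih).of_eq (fun a => by simp)

section Final

variable {G : Type*} [Group G] {s : ℕ} {Sf : Fin s → G} {mk uk : ℕ → ℕ}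
  {conn : ℕ → Fin s → ℕ → ℤ → ℤ → Prop} {m : ℕ} {Θ : List (ℕ × ℕ × ℕ)}
  {k : ℕ} {e : Fin k → G} {j0 : Fin k} {js : Fin s → Fin k} {K : ℕ}
  {S : CSys} {ζ : ℕ} {enc : S.Z × E3 → Fin ζ}

theorem ps_primrec {α : Type*} [Primcodable α] {l : α → List ℕ} {c : α → Fin k → ℕ}
    {zd ct : α → Fin k → ℕ → ℕ} (hl : Primrec l) (hc : ∀ j, Primrec (fun a => c a j))
    (hz : ∀ j i, Primrec (fun a => zd a j i)) (ht : ∀ j i, Primrec (fun a => ct a j i)) :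
    PrimrecPred (fun a => PS Sf mk uk conn m Θ e j0 js K S enc (l a) (c a) (zd a) (ct a)) := by
  have := S.fin
  have : Finite (ZMod 3) := inferInstanceAs (Finite (Fin 3))
  have hlen := Primrec.list_length.comp hl
  have heq : ∀ {f g : α → ℕ}, Primrec f → Primrec g → PrimrecPred (fun a => f a = g a) :=
    fun hf hg => Primrec.eq.comp hf hg
  refine PrimrecPred.and ?_ (PrimrecPred.and ?_ ?_)
  · exact primrecPred_forall (fun j => Primrec.nat_lt.comp (hc j) (Primrec.const m))
  · exact primrecPred_forall (fun i => primrecPred_mem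
      ((hc j0).pair ((Primrec.const _).pair (hc (js i)))) Θ)
  refine primrecPred_forall (fun α => primrecPred_imp ?_ ?_)
  · exact primrecPred_forall (fun j => heq (hc j) (Primrec.const _))
  refine PrimrecPred.and ?_ (PrimrecPred.and ?_ ?_)
  · refine primrecPred_forall (fun i => primrecPred_imp (primrecPred_const _) ?_)
    refine primrecPred_exists (fun y => (heq (hz _ _) (Primrec.const _)).and
      (PrimrecPred.and (Primrec.nat_le.comp (ht _ _) hlen) ?_))
    exact primrecPred_imp (primrecPred_const _)
      (heq ((Primrec.list_getD 0).comp hl (ht _ _)) (Primrec.const _))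
  · refine primrecPred_forall (fun i => primrecPred_forall (fun j => primrecPred_forall (fun i' =>
      primrecPred_imp (primrecPred_const _) ?_)))
    refine primrecPred_exists (fun y => primrecPred_exists (fun y' => ?_))
    refine (heq (hz _ _) (Primrec.const _)).and ((heq (hz _ _) (Primrec.const _)).and
      ((primrecPred_const _).and (primrecPred_imp (primrecPred_const _) ?_)))
    refine PrimrecPred.and ?_ (PrimrecPred.and ?_ ?_)
    · exact primrecPred_imp (primrecPred_const _) (heq (ht _ _) (ht _ _))
    · exact primrecPred_imp (primrecPred_const _) (heq (ht _ _) (Primrec.const _))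
    · exact primrecPred_imp (primrecPred_const _) (heq (ht _ _)
        (Primrec.nat_min.comp (Primrec.succ.comp (ht _ _)) hlen))
  · refine primrecPred_forall (fun i => primrecPred_forall (fun j => primrecPred_forall (fun i' =>
      primrecPred_forall (fun j2 => primrecPred_forall (fun i2 => ?_)))))
    refine primrecPred_imp (primrecPred_const _) (primrecPred_imp (primrecPred_const _)
      (primrecPred_imp (primrecPred_const _) ?_))
    refine primrecPred_forall (fun y => primrecPred_forall (fun y2 => ?_))
    exact primrecPred_imp (heq (hz _ _) (Primrec.const _))
      (primrecPred_imp (heq (hz _ _) (Primrec.const _)) (primrecPred_const _))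

theorem ps_congr {l : List ℕ} {c c' : Fin k → ℕ} {zd zd' ct ct' : Fin k → ℕ → ℕ}
    (hc : ∀ j, c j = c' j) (hz : ∀ j, ∀ i < K, zd j i = zd' j i)
    (ht : ∀ j, ∀ i < K, ct j i = ct' j i)
    (h : PS Sf mk uk conn m Θ e j0 js K S enc l c zd ct) :
    PS Sf mk uk conn m Θ e j0 js K S enc l c' zd' ct' := by
  have : c = c' := funext hc
  subst this
  obtain ⟨h1, h2, h3⟩ := h
  refine ⟨h1, h2, fun α hα => ?_⟩
  obtain ⟨h4, h5, h6⟩ := h3 α hα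
  have hz' : ∀ j (i : Fin K), zd j i = zd' j i := fun j i => hz j i i.2
  have ht' : ∀ j (i : Fin K), ct j i = ct' j i := fun j i => ht j i i.2
  simp only [hz', ht'] at h4 h5 h6
  exact ⟨h4, h5, h6⟩

end Final

theorem domino_aux {G : Type*} [Group G] {s : ℕ}
    (Sf : Fin s → G) (hgen : Subgroup.closure (Set.range Sf) = ⊤)
    (hsim : ∃ (m : ℕ) (Θ : List (ℕ × ℕ × ℕ)) (mk uk : ℕ → ℕ)
        (conn : ℕ → Fin s → ℕ → ℤ → ℤ → Prop),
      (∃ a : G → ℕ, IsSolution Sf m Θ a) ∧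
      ∀ a : G → ℕ, IsSolution Sf m Θ a →
        Nonempty (gridGraph ≃g DecodedGraph Sf mk uk conn a)) :
    ¬ DominoDecidable Sf := by
  classical
  intro hdom
  obtain ⟨m, Θ, mk, uk, conn, ⟨a, ha⟩, hsim⟩ := hsim
  have hall : ∀ a : G → ℕ, IsSolution Sf m Θ a → ∃ φ, GridIn Sf mk uk conn a φ :=
    fun a ha => gridIn_exists _ _ _ _ (hsim a ha)
  obtain ⟨S, ℓ, hℓ, hund⟩ := berger
  have := S.fin
  have : Finite (ZMod 3) := inferInstanceAs (Finite (Fin 3))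
  obtain ⟨ζ, ⟨q⟩⟩ := Finite.exists_equiv_fin (S.Z × E3)
  obtain ⟨F, hloc, hin⟩ := nb_local Sf mk uk conn m Θ hall
  obtain ⟨k, e, j0, ht, -, hcov⟩ := tameEnum_exists Sf hgen (F ∪ Finset.univ.image Sf)
  have hF : ∀ g ∈ F, ∃ j, e j = g := fun g hg => hcov g (Finset.mem_union_left _ hg)
  choose js hjs using fun i : Fin s => hcov (Sf i)
    (Finset.mem_union_right _ (Finset.mem_image_of_mem _ (Finset.mem_univ i)))
  let K : ℕ := (Finset.range m).sup mk
  have hK : ∀ c < m, mk c ≤ K := fun c hc => Finset.le_sup (f := mk) (Finset.mem_range.2 hc)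
  let Λ : ℕ → ℕ := fun n => m + ζ + (ℓ n).length + 1
  have hΛ : Primrec Λ := Primrec.succ.comp
    (Primrec.nat_add.comp (Primrec.const (m + ζ)) (Primrec.list_length.comp hℓ))
  let P : ℕ → List (List ℕ) → Prop := fun n w =>
    PS Sf mk uk conn m Θ e j0 js K S q (ℓ n) (fun j => (w.getD j []).getD 0 0)
      (fun j i => (w.getD j []).getD (1 + i) 0) (fun j i => (w.getD j []).getD (1 + K + i) 0)
  have hg : ∀ (j : Fin k) (t : ℕ), Primrec (fun a : ℕ × List (List ℕ) =>
      (a.2.getD j []).getD t 0) := fun j t =>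
    (Primrec.list_getD 0).comp ((Primrec.list_getD []).comp Primrec.snd (Primrec.const _))
      (Primrec.const _)
  have hP : PrimrecRel P := ps_primrec (hℓ.comp Primrec.fst) (fun j => hg j 0)
    (fun j i => hg j (1 + i)) (fun j i => hg j (1 + K + i))
  have hw : ∀ (x : G → List ℕ) (g : G) (j : Fin k),
      (List.ofFn (fun j => x (g * e j))).getD j [] = x (g * e j) := by
    intro x g j
    rw [List.getD_eq_getElem _ _ (by simp)]
    simp
  refine hund ((block_computable Sf ht Λ hΛ (1 + 2 * K) P hP hdom).of_eq (fun n => ?_))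
  constructor
  · rintro ⟨x, -, hx⟩
    refine tiles_of_ps ht.one hjs q.injective hK F hF hin hall (fun g => (x g).getD 0 0)
      (fun g i => (x g).getD (1 + i) 0) (fun g i => (x g).getD (1 + K + i) 0) ?_
    intro g
    have := hx g
    simp only [P, hw] at this
    exact this
  · intro hT
    obtain ⟨φ, hφ⟩ := hall a ha
    obtain ⟨c, zd, ct, h1, h2, h3, h4⟩ := ps_of_tiles ht.one hjs q.injective F hF hloc ha hφ hT
    let f : G → ℕ → ℕ := fun g t =>
      if t = 0 then c g else if t ≤ K then zd g (t - 1) else ct g (t - 1 - K)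
    have hf : ∀ g, ∀ t < 1 + 2 * K, ((List.range (1 + 2 * K)).map (f g)).getD t 0 = f g t := by
      intro g t htt
      rw [List.getD_eq_getElem _ _ (by simpa using htt)]
      simp
    refine ⟨fun g => (List.range (1 + 2 * K)).map (f g), ?_, ?_⟩
    · intro g
      refine ⟨by simp, ?_⟩
      intro v hv
      obtain ⟨t, -, rfl⟩ := List.mem_map.1 hv
      have e1 := h1 g
      have e2 := h2 g (t - 1)
      have e3 := h3 g (t - 1 - K)
      simp only [f, Λ]
      split_ifs <;> omega
    · intro g
      refine ps_congr ?_ ?_ ?_ (h4 g)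
      · intro j
        beta_reduce
        rw [hw (fun g => (List.range (1 + 2 * K)).map (f g)), hf _ _ (by omega)]
        simp [f]
      · intro j i hi
        beta_reduce
        rw [hw (fun g => (List.range (1 + 2 * K)).map (f g)), hf _ _ (by omega)]
        simp only [f]
        rw [if_neg (by omega), if_pos (by omega)]
        congr 1
        omega
      · intro j i hi
        beta_reduce
        rw [hw (fun g => (List.range (1 + 2 * K)).map (f g)), hf _ _ (by omega)]
        simp only [f]
        rw [if_neg (by omega), if_neg (by omega)]
        congr 1
        omega

/-- If the Cayley graph of `G` simulates the grid ℤ² — i.e. there is a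
nonempty subshift of finite type on `G` each of whose configurations decodes,
via marked slots and local connecting patterns, a graph isomorphic to the
Cayley graph of ℤ² — then the domino problem on `G` is undecidable. -/
theorem domino_undecidable_of_grid_simulation {G : Type*} [Group G] {s : ℕ}
    (Sf : Fin s → G) (hgen : Subgroup.closure (Set.range Sf) = ⊤)
    (hsim : ∃ (m : ℕ) (Θ : List (ℕ × ℕ × ℕ)) (mk uk : ℕ → ℕ)
        (conn : ℕ → Fin s → ℕ → ℤ → ℤ → Prop),
      (∃ a : G → ℕ, IsSolution Sf m Θ a) ∧
      ∀ a : G → ℕ, IsSolution Sf m Θ a →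
        Nonempty (gridGraph ≃g DecodedGraph Sf mk uk conn a)) :
    ¬ DominoDecidable Sf := by
  exact domino_aux Sf hgen hsim
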